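/- arXiv:2510.27193 — 6 statements merged into one kernel-verified Lean document; each statement's English description precedes it below -/
import Mathlib

section
/- Let n ≥ 1 and let A be an invertible n×n complex matrix none of whose eigenvalues lies on the closed negative real axis (-∞, 0]. Then there exists a unique n×n complex matrix X such that exp(X) = A and every eigenvalue z of X satisfies -π < Im(z) < π (X is the principal logarithm of A). -/
open NormedSpace

open Matrix in
theorem plog_mem_spectrum {n : ℕ} (X : Matrix (Fin n) (Fin n) ℂ) (z : ℂ) :
    z ∈ spectrum ℂ X ↔ ∃ v : Fin n → ℂ, v ≠ 0 ∧ X *ᵥ v = z • v := by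
  rw [← Matrix.spectrum_toLin', ← Module.End.hasEigenvalue_iff_mem_spectrum]
  constructor
  · intro h
    obtain ⟨v, hv⟩ := h.exists_hasEigenvector
    exact ⟨v, hv.2, by simpa using hv.apply_eq_smul⟩
  · rintro ⟨v, hv, h⟩
    exact Module.End.hasEigenvalue_of_hasEigenvector
      (x := v) ⟨Module.End.mem_eigenspace_iff.2 (by simpa using h), hv⟩

open Matrix in
theorem plog_common {n : ℕ} (X Y : Matrix (Fin n) (Fin n) ℂ) (h : Commute X Y) (z : ℂ)
    (hz : z ∈ spectrum ℂ X) :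
    ∃ v : Fin n → ℂ, v ≠ 0 ∧ X *ᵥ v = z • v ∧ ∃ y ∈ spectrum ℂ Y, Y *ᵥ v = y • v := by
  obtain ⟨w, hw0, hw⟩ := (plog_mem_spectrum X z).1 hz
  let E := Module.End.eigenspace (Matrix.toLin' X) z
  have hwE : w ∈ E := Module.End.mem_eigenspace_iff.2 (by simpa using hw)
  have hinv : ∀ u ∈ E, Matrix.toLin' Y u ∈ E := by
    intro u hu
    have hu' := Module.End.mem_eigenspace_iff.1 hu
    refine Module.End.mem_eigenspace_iff.2 ?_
    simp only [Matrix.toLin'_apply] at hu' ⊢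
    rw [Matrix.mulVec_mulVec, h.eq, ← Matrix.mulVec_mulVec, hu', Matrix.mulVec_smul]
  have : Nontrivial E := ⟨⟨⟨w, hwE⟩, 0, fun e => hw0 (by simpa using congrArg Subtype.val e)⟩⟩
  obtain ⟨y, hy⟩ := Module.End.exists_eigenvalue ((Matrix.toLin' Y).restrict hinv)
  obtain ⟨v, hv⟩ := hy.exists_hasEigenvector
  have hv1 : Y *ᵥ (v : Fin n → ℂ) = y • (v : Fin n → ℂ) := by
    simpa using congrArg Subtype.val hv.apply_eq_smul
  have hv0 : (v : Fin n → ℂ) ≠ 0 := fun e => hv.2 (Subtype.ext e)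
  refine ⟨v, hv0, ?_, y, (plog_mem_spectrum Y y).2 ⟨v, hv0, hv1⟩, hv1⟩
  simpa using Module.End.mem_eigenspace_iff.1 v.2

theorem plog_nilp {n : ℕ} (X : Matrix (Fin n) (Fin n) ℂ) (h : ∀ z ∈ spectrum ℂ X, z = 0) :
    IsNilpotent X := by
  have h1 : X.charpoly.roots = Multiset.replicate X.charpoly.roots.card 0 := by
    refine Multiset.eq_replicate.2 ⟨rfl, fun b hb => h b ?_⟩
    exact Matrix.mem_spectrum_iff_isRoot_charpoly.2 (Polynomial.isRoot_of_mem_roots hb)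
  have h2 := (IsAlgClosed.splits X.charpoly).eq_prod_roots_of_monic X.charpoly_monic
  have h3 := X.aeval_self_charpoly
  rw [h2, h1] at h3
  exact ⟨_, by simpa using h3⟩

open Matrix in
theorem plog_exp_hasSum {n : ℕ} (X : Matrix (Fin n) (Fin n) ℂ) :
    HasSum (fun k : ℕ => ((k.factorial : ℂ)⁻¹) • X ^ k) (exp X) := by
  open scoped Matrix.Norms.Operator in
  exact NormedSpace.exp_series_hasSum_exp' (𝕂 := ℂ) X

open Matrix in
theorem plog_pow_mulVec {n : ℕ} (X : Matrix (Fin n) (Fin n) ℂ) (x : ℂ) (v : Fin n → ℂ)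
    (h : X *ᵥ v = x • v) (k : ℕ) : (X ^ k) *ᵥ v = x ^ k • v := by
  induction k with
  | zero => simp
  | succ k ih => rw [pow_succ, ← Matrix.mulVec_mulVec, h, Matrix.mulVec_smul, ih, smul_smul,
      pow_succ, mul_comm]

open Matrix in
theorem plog_exp_mulVec {n : ℕ} (X : Matrix (Fin n) (Fin n) ℂ) (x : ℂ) (v : Fin n → ℂ)
    (h : X *ᵥ v = x • v) : (exp X) *ᵥ v = Complex.exp x • v := by
  have h1 := (plog_exp_hasSum X).map
    (⟨⟨fun M => M *ᵥ v, by simp⟩, fun A B => Matrix.add_mulVec A B v⟩ :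
      Matrix (Fin n) (Fin n) ℂ →+ (Fin n → ℂ))
    (by exact Continuous.matrix_mulVec continuous_id continuous_const)
  have h2 := (NormedSpace.exp_series_hasSum_exp' (𝕂 := ℂ) x).smul_const v
  rw [← Complex.exp_eq_exp_ℂ] at h2
  refine h1.unique ?_
  convert h2 using 2 with k
  simp [Matrix.smul_mulVec, plog_pow_mulVec X x v h, smul_smul]

theorem plog_exp_nilp {n : ℕ} (X : Matrix (Fin n) (Fin n) ℂ) (h : IsNilpotent X) :
    ∃ g : Matrix (Fin n) (Fin n) ℂ, (∀ Y, Commute Y X → Commute Y g) ∧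
      exp X = 1 + X + X * X * g := by
  obtain ⟨m, hm⟩ := h
  refine ⟨∑ i ∈ Finset.range m, (((i + 2).factorial : ℂ)⁻¹) • X ^ i, ?_, ?_⟩
  · intro Y hY
    exact Commute.sum_right _ _ _ fun i _ => (hY.pow_right i).smul_right _
  · refine (plog_exp_hasSum X).unique ?_
    have := hasSum_sum_of_ne_finset_zero (L := SummationFilter.unconditional ℕ) (f := fun k : ℕ => ((k.factorial : ℂ)⁻¹) • X ^ k)
      (s := Finset.range (m + 2)) ?_
    · convert this using 1
      rw [Finset.sum_range_succ', Finset.sum_range_succ', Finset.mul_sum]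
      simp only [mul_smul_comm, ← pow_two, ← pow_add]
      simp [add_comm, add_left_comm]
      abel
    · intro b hb
      have : m ≤ b := by simp at hb; omega
      rw [pow_eq_zero_of_le this hm, smul_zero]

open Matrix in
theorem plog_eig_nilp {n : ℕ} (X : Matrix (Fin n) (Fin n) ℂ) (h : IsNilpotent X) (x : ℂ)
    (v : Fin n → ℂ) (hv : v ≠ 0) (hx : X *ᵥ v = x • v) : x = 0 := by
  obtain ⟨m, hm⟩ := h
  have := plog_pow_mulVec X x v hx m
  rw [hm, Matrix.zero_mulVec] at this
  rcases smul_eq_zero.1 this.symm with h | h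
  · exact eq_zero_of_pow_eq_zero h
  · exact absurd h hv

theorem plog_exp_eq_one {n : ℕ} (Z : Matrix (Fin n) (Fin n) ℂ) (h : IsNilpotent Z)
    (hZ : exp Z = 1) : Z = 0 := by
  obtain ⟨g, hg, he⟩ := plog_exp_nilp Z h
  have h1 : Z * (1 + Z * g) = 0 := by
    rw [hZ] at he
    have : Z + Z * Z * g = 0 := by
      have := he.symm
      rwa [add_assoc, add_eq_left] at this
    rw [mul_add, mul_one, ← mul_assoc, this]
  have h2 : IsUnit (1 + Z * g) := ((hg Z (Commute.refl Z)).isNilpotent_mul_right h).isUnit_one_add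
  exact (h2.mul_left_eq_zero).1 h1

/-- bicommutant -/
def PlogCC {n : ℕ} (A : Matrix (Fin n) (Fin n) ℂ) :=
  Subalgebra.centralizer ℂ (Subalgebra.centralizer ℂ {A} : Set (Matrix (Fin n) (Fin n) ℂ))

theorem plog_mem_CC {n : ℕ} (A X : Matrix (Fin n) (Fin n) ℂ) :
    X ∈ PlogCC A ↔ ∀ Y, Commute Y A → Commute Y X := by
  simp [PlogCC, Subalgebra.mem_centralizer_iff, Set.mem_centralizer_iff, Commute, SemiconjBy, eq_comm]

theorem plog_CC_comm {n : ℕ} {A X Y : Matrix (Fin n) (Fin n) ℂ} (hX : X ∈ PlogCC A)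
    (hY : Y ∈ PlogCC A) : Commute X Y :=
  (plog_mem_CC A Y).1 hY _ ((plog_mem_CC A X).1 hX _ (Commute.refl A)).symm

theorem plog_CC_exp {n : ℕ} {A X : Matrix (Fin n) (Fin n) ℂ} (hX : X ∈ PlogCC A) :
    exp X ∈ PlogCC A :=
  (plog_mem_CC A _).2 fun Y hY => ((plog_mem_CC A X).1 hX Y hY).exp_right

theorem plog_CC_self {n : ℕ} (A : Matrix (Fin n) (Fin n) ℂ) : A ∈ PlogCC A :=
  (plog_mem_CC A _).2 fun _ hY => hY

theorem plog_newton {n : ℕ} (A X0 d : Matrix (Fin n) (Fin n) ℂ) (hX0 : X0 ∈ PlogCC A)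
    (hd : A * exp (-X0) = 1 + d) (hn : IsNilpotent d) (k : ℕ) :
    ∃ c ∈ PlogCC A, ∃ e ∈ PlogCC A, A * exp (-(X0 + d * c)) = 1 + d ^ (k + 1) * e := by
  have hdm : d ∈ PlogCC A := by
    have : d = A * exp (-X0) - 1 := by rw [hd]; abel
    rw [this]
    exact sub_mem (mul_mem (plog_CC_self A) (plog_CC_exp (neg_mem hX0))) (one_mem _)
  induction k with
  | zero => exact ⟨0, zero_mem _, 1, one_mem _, by simpa using hd⟩
  | succ k ih =>
    obtain ⟨c, hc, e, he, h⟩ := ih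
    have hDm : d ^ (k + 1) * e ∈ PlogCC A := mul_mem (pow_mem hdm _) he
    have hDe : d ^ (k + 1) * e = d * (d ^ k * e) := by rw [pow_succ', mul_assoc]
    have hDn : IsNilpotent (-(d ^ (k + 1) * e)) := by
      rw [hDe]
      exact ((plog_CC_comm hdm (mul_mem (pow_mem hdm _) he)).isNilpotent_mul_right hn).neg
    obtain ⟨g, hg, hge⟩ := plog_exp_nilp _ hDn
    have hgm : g ∈ PlogCC A := (plog_mem_CC A g).2 fun Y hY =>
      hg Y ((plog_mem_CC A _).1 (neg_mem hDm) Y hY)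
    set D := d ^ (k + 1) * e with hD
    have hcd : d * (c + d ^ k * e) = d * c + D := by rw [mul_add, hDe]
    refine ⟨c + d ^ k * e, add_mem hc (mul_mem (pow_mem hdm _) he),
      d ^ k * e * e * (-1 + g + D * g), ?_, ?_⟩
    · exact mul_mem (mul_mem (mul_mem (pow_mem hdm _) he) he)
        (add_mem (add_mem (neg_mem (one_mem _)) hgm) (mul_mem hDm hgm))
    · have hx : -(X0 + d * (c + d ^ k * e)) = -(X0 + d * c) + -D := by rw [hcd]; abel
      rw [hx, Matrix.exp_add_of_commute _ _ (plog_CC_comm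
        (neg_mem (add_mem hX0 (mul_mem hdm hc))) (neg_mem hDm)), ← mul_assoc, h, hge]
      have hDD : D * D = d ^ (k + 1 + 1) * (d ^ k * e * e) := by
        have h1 : Commute e (d ^ (k + 1)) := plog_CC_comm he (pow_mem hdm _)
        calc D * D = d ^ (k + 1) * (e * d ^ (k + 1)) * e := by rw [hD]; noncomm_ring
          _ = d ^ (k + 1) * (d ^ (k + 1) * e) * e := by rw [h1.eq]
          _ = _ := by
            rw [← mul_assoc, ← mul_assoc, ← mul_assoc, ← pow_add, ← pow_add]
            congr 3; ring
      rw [← mul_assoc, ← hDD]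
      noncomm_ring

theorem plog_exists {n : ℕ} (A : Matrix (Fin n) (Fin n) ℂ)
    (hspec : ∀ μ ∈ spectrum ℂ A, ¬(μ.im = 0 ∧ μ.re ≤ 0)) :
    ∃ X ∈ PlogCC A, exp X = A ∧ ∀ z ∈ spectrum ℂ X, -Real.pi < z.im ∧ z.im < Real.pi := by
  classical
  have hfin : (spectrum ℂ A).Finite := A.finite_spectrum
  set S := hfin.toFinset with hS
  set q : Polynomial ℂ := Lagrange.interpolate S id Complex.log with hq
  have hqe : ∀ μ ∈ spectrum ℂ A, q.eval μ = Complex.log μ := fun μ hμ =>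
    Lagrange.eval_interpolate_at_node (v := id) Complex.log (Function.injective_id.injOn)
      (hfin.mem_toFinset.2 hμ)
  set X0 := Polynomial.aeval A q with hX0
  have hX0m : X0 ∈ PlogCC A := 
    Algebra.adjoin_le (Set.singleton_subset_iff.2 (plog_CC_self A))
      (Polynomial.aeval_mem_adjoin_singleton ℂ A)
  have hX0v : ∀ μ ∈ spectrum ℂ A, ∀ v, A.mulVec v = μ • v → X0.mulVec v = Complex.log μ • v := by
    intro μ hμ v hv
    rw [← hqe μ hμ, hX0, Polynomial.aeval_eq_sum_range, Polynomial.eval_eq_sum_range,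
      Matrix.sum_mulVec, Finset.sum_smul]
    refine Finset.sum_congr rfl fun i _ => ?_
    rw [Matrix.smul_mulVec, plog_pow_mulVec A μ v hv, smul_smul]
  have hne : ∀ μ ∈ spectrum ℂ A, μ ≠ 0 := by
    rintro μ hμ rfl
    exact hspec 0 hμ (by simp)
  set d := A * exp (-X0) - 1 with hd
  have hEm : exp (-X0) ∈ PlogCC A := plog_CC_exp (neg_mem hX0m)
  have hdm : d ∈ PlogCC A := sub_mem (mul_mem (plog_CC_self A) hEm) (one_mem _)
  have hdn : IsNilpotent d := by
    refine plog_nilp d fun z hz => ?_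
    obtain ⟨v, hv0, hv, μ, hμ, hμv⟩ := plog_common d A (plog_CC_comm hdm (plog_CC_self A)) z hz
    have h1 := plog_exp_mulVec (-X0) (-Complex.log μ) v
      (by rw [Matrix.neg_mulVec, hX0v μ hμ v hμv, neg_smul])
    rw [Complex.exp_neg, Complex.exp_log (hne μ hμ)] at h1
    rw [hd, Matrix.sub_mulVec, ← Matrix.mulVec_mulVec, h1, Matrix.mulVec_smul, hμv, smul_smul,
      inv_mul_cancel₀ (hne μ hμ), one_smul, Matrix.one_mulVec, sub_self] at hv
    exact (smul_eq_zero.1 hv.symm).resolve_right hv0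
  obtain ⟨m, hm⟩ := id hdn
  obtain ⟨c, hc, e, he, h⟩ := plog_newton A X0 d hX0m (by rw [hd]; abel) hdn m
  rw [pow_succ, hm, zero_mul, zero_mul, add_zero] at h
  have hXm : X0 + d * c ∈ PlogCC A := add_mem hX0m (mul_mem hdm hc)
  refine ⟨X0 + d * c, hXm, ?_, ?_⟩
  · have h1 : exp (-(X0 + d * c)) * exp (X0 + d * c) = 1 := by
      rw [← Matrix.exp_add_of_commute _ _ (Commute.refl (X0 + d * c)).neg_left, neg_add_cancel,
        NormedSpace.exp_zero]
    calc exp (X0 + d * c) = A * exp (-(X0 + d * c)) * exp (X0 + d * c) := by rw [h, one_mul]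
      _ = A := by rw [mul_assoc, h1, mul_one]
  · intro z hz
    obtain ⟨v, hv0, hv, μ, hμ, hμv⟩ := plog_common _ A (plog_CC_comm hXm (plog_CC_self A)) z hz
    have h2 := hX0v μ hμ v hμv
    have h3 : (d * c).mulVec v = (z - Complex.log μ) • v := by
      rw [Matrix.add_mulVec, h2] at hv
      rw [sub_smul, ← hv]; abel
    have h4 := plog_eig_nilp _ ((plog_CC_comm hdm hc).isNilpotent_mul_right hdn) _ v hv0 h3
    rw [sub_eq_zero.1 h4, Complex.log_im]
    refine ⟨Complex.neg_pi_lt_arg _, lt_of_le_of_ne (Complex.arg_le_pi _) fun hpi => ?_⟩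
    have := Complex.arg_eq_pi_iff.1 hpi
    exact hspec μ hμ ⟨this.2, this.1.le⟩

/-- **Principal logarithm of a complex matrix.**
Let `n ≥ 1` and let `A` be an invertible `n×n` complex matrix none of whose eigenvalues lies
on the closed negative real axis `(-∞, 0]`. Then there exists a unique `n×n` complex matrix
`X` such that `exp(X) = A` and every eigenvalue `z` of `X` satisfies `-π < Im z < π`. -/
theorem principal_log_exists_unique (n : ℕ) (hn : 1 ≤ n)
    (A : Matrix (Fin n) (Fin n) ℂ) (hA : IsUnit A)
    (hspec : ∀ μ ∈ spectrum ℂ A, ¬(μ.im = 0 ∧ μ.re ≤ 0)) :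
    ∃! X : Matrix (Fin n) (Fin n) ℂ,
      NormedSpace.exp X = A ∧
        ∀ z ∈ spectrum ℂ X, -Real.pi < z.im ∧ z.im < Real.pi := by
  obtain ⟨X, hXm, hX, hXs⟩ := plog_exists A hspec
  refine ⟨X, ⟨hX, hXs⟩, ?_⟩
  rintro Y ⟨hY, hYs⟩
  have hYA : Commute Y A := by rw [← hY]; exact (Commute.refl Y).exp_right
  have hYX : Commute Y X := (plog_mem_CC A X).1 hXm Y hYA
  have hZ : exp (Y - X) = 1 := by
    rw [sub_eq_add_neg, Matrix.exp_add_of_commute _ _ hYX.neg_right, hY, ← hX,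
      ← Matrix.exp_add_of_commute _ _ (Commute.refl X).neg_right, add_neg_cancel,
      NormedSpace.exp_zero]
  refine sub_eq_zero.1 (plog_exp_eq_one _ (plog_nilp _ fun z hz => ?_) hZ)
  obtain ⟨v, hv0, hv, y, hy, hyv⟩ := plog_common (Y - X) Y
    ((Commute.refl Y).sub_left hYX.symm) z hz
  have hxv : X.mulVec v = (y - z) • v := by
    rw [Matrix.sub_mulVec, hyv] at hv
    rw [sub_smul, ← hv]; abel
  have hx := hXs _ ((plog_mem_spectrum X _).2 ⟨v, hv0, hxv⟩)
  have hy' := hYs _ hy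
  have he := plog_exp_mulVec _ _ _ hv
  rw [hZ, Matrix.one_mulVec] at he
  have he1 : Complex.exp z = 1 := by
    have : (Complex.exp z - 1) • v = 0 := by rw [sub_smul, ← he, one_smul, sub_self]
    exact sub_eq_zero.1 ((smul_eq_zero.1 this).resolve_right hv0)
  obtain ⟨k, hk⟩ := Complex.exp_eq_one_iff.1 he1
  have him : z.im = k * (2 * Real.pi) := by rw [hk]; simp
  rw [Complex.sub_im] at hx
  have hpi := Real.pi_pos
  have hk1 : (k : ℝ) < 1 := by nlinarith
  have hk2 : (-1 : ℝ) < k := by nlinarith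
  have hk0 : k = 0 := by
    have h1 : k < 1 := by exact_mod_cast hk1
    have h2 : -1 < k := by exact_mod_cast hk2
    omega
  rw [hk, hk0]; simp
end

section
/- Let A be an invertible n×n real matrix such that no eigenvalue of A (viewed as a complex matrix) lies on the closed negative real axis (-∞, 0]. Then there exists an n×n real matrix X with exp(X) = A and such that every eigenvalue z of X (viewed as a complex matrix) satisfies -π < Im(z) < π. -/
open NormedSpace

/-- Logarithm of a unipotent element. -/
theorem unipotent_log {R : Type*} [Ring R] [Algebra ℚ R] (k : ℕ) :
    ∀ N : R, N ^ (k + 1) = 0 → ∃ L : R, IsNilpotent L ∧ (∀ B, Commute B N → Commute B L) ∧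
      IsNilpotent.exp L = 1 + N := by
  induction k with
  | zero =>
    intro N hN
    have : N = 0 := by simpa using hN
    subst this
    exact ⟨0, IsNilpotent.zero, fun B h => h, by simp [IsNilpotent.exp_zero]⟩
  | succ k ih =>
    intro N hN
    have hnil : IsNilpotent N := ⟨_, hN⟩
    obtain ⟨C, hC, hCc⟩ : ∃ C : R, IsNilpotent.exp (-N) = 1 - N + N ^ 2 * C ∧
        ∀ B, Commute B N → Commute B C := by
      refine ⟨∑ i ∈ Finset.range (k + 1), ((i + 2).factorial : ℚ)⁻¹ • ((-N) ^ i), ?_, ?_⟩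
      · rw [IsNilpotent.exp_eq_sum (k := k + 1 + 2), Finset.sum_range_succ', Finset.sum_range_succ',
          Finset.mul_sum]
        · have key : ∀ i, (-N) ^ (i + 1 + 1) = N ^ 2 * (-N) ^ i := by
            intro i
            have h := ((Commute.refl N).neg_right.pow_right i).pow_left 2
            rw [h.eq, pow_succ, pow_succ, mul_assoc, neg_mul_neg, pow_two]
          simp only [key, mul_smul_comm]
          simp only [zero_add, pow_one, pow_zero, Nat.factorial_one, Nat.factorial_zero,
            Nat.cast_one, inv_one, one_smul]
          abel
        · rw [neg_pow, pow_succ N, hN]; simp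
      · intro B hB
        exact Commute.sum_right _ _ _ fun i _ => (hB.neg_right.pow_right i).smul_right _
    have hNC : Commute N C := hCc N (Commute.refl N)
    obtain ⟨D, hD, hDc⟩ : ∃ D : R, IsNilpotent.exp (-N) * (1 + N) = 1 + N ^ 2 * D ∧
        ∀ B, Commute B N → Commute B D := by
      refine ⟨C * (1 + N) - 1, ?_, ?_⟩
      · rw [hC]; noncomm_ring
      · intro B hB
        exact ((hCc B hB).mul_right ((Commute.one_right B).add_right hB)).sub_right
          (Commute.one_right B)
    have hND : Commute N D := hDc N (Commute.refl N)
    obtain ⟨L, hL, hLc, hLe⟩ := ih (N ^ 2 * D) (by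
      rw [(hND.pow_left 2).mul_pow, ← pow_mul, pow_eq_zero_of_le (by omega) hN, zero_mul])
    have hc : ∀ B, Commute B N → Commute B L := fun B hB =>
      hLc B ((hB.pow_right 2).mul_right (hDc B hB))
    have hNL : Commute N L := hc N (Commute.refl N)
    refine ⟨N + L, hNL.isNilpotent_add hnil hL, fun B hB => hB.add_right (hc B hB), ?_⟩
    rw [IsNilpotent.exp_add_of_commute hNL hnil hL, hLe, ← hD, ← mul_assoc,
      IsNilpotent.exp_mul_exp_neg_self hnil, one_mul]

theorem exp_eq_nilp_exp {n : ℕ} (L : Matrix (Fin n) (Fin n) ℝ) (hL : IsNilpotent L) :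
    NormedSpace.exp L = IsNilpotent.exp L := by
  obtain ⟨k, hk⟩ := hL
  rw [exp_eq_tsum_rat, IsNilpotent.exp_eq_sum hk]
  apply tsum_eq_sum
  intro i hi
  rw [pow_eq_zero_of_le (by simpa using hi) hk, smul_zero]

theorem exp_mulVec_eigen {n : ℕ} (Y : Matrix (Fin n) (Fin n) ℂ) (v : Fin n → ℂ) (z : ℂ)
    (h : Y.mulVec v = z • v) : (NormedSpace.exp Y).mulVec v = Complex.exp z • v := by
  have hpow : ∀ k : ℕ, (Y ^ k).mulVec v = z ^ k • v := by
    intro k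
    induction k with
    | zero => simp
    | succ k ih => rw [pow_succ, ← Matrix.mulVec_mulVec, h, Matrix.mulVec_smul, ih, smul_smul,
        pow_succ, mul_comm]
  have h1 : HasSum (fun k : ℕ => ((k.factorial : ℂ)⁻¹) • Y ^ k) (NormedSpace.exp Y) := by
    open scoped Matrix.Norms.Operator in
    exact NormedSpace.exp_series_hasSum_exp' (𝕂 := ℂ) Y
  have h2 := h1.map ((Matrix.mulVecBilin ℂ ℂ).flip v : Matrix (Fin n) (Fin n) ℂ →ₗ[ℂ] (Fin n → ℂ))
    (LinearMap.continuous_of_finiteDimensional _)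
  have h3 : HasSum (fun k : ℕ => ((k.factorial : ℂ)⁻¹) • z ^ k) (Complex.exp z) := by
    rw [Complex.exp_eq_exp_ℂ]
    exact NormedSpace.exp_series_hasSum_exp' (𝕂 := ℂ) z
  have h4 := h3.smul_const v
  refine HasSum.unique (f := fun k : ℕ => ((k.factorial : ℂ)⁻¹ • z ^ k) • v) ?_ h4
  convert h2 using 1
  · funext k
    simp [hpow, smul_smul]
  · rfl

theorem common_eigen {n : ℕ} (B M : Matrix (Fin n) (Fin n) ℂ) (h : Commute B M) (z : ℂ)
    (hz : z ∈ spectrum ℂ B) : ∃ v : Fin n → ℂ, v ≠ 0 ∧ B.mulVec v = z • v ∧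
      ∃ μ ∈ spectrum ℂ M, M.mulVec v = μ • v := by
  rw [← Matrix.spectrum_toLin', ← Module.End.hasEigenvalue_iff_mem_spectrum] at hz
  have hmaps : Set.MapsTo (Matrix.toLin' M) (Module.End.eigenspace (Matrix.toLin' B) z)
      (Module.End.eigenspace (Matrix.toLin' B) z) :=
    Module.End.mapsTo_genEigenspace_of_comm (h.map Matrix.toLinAlgEquiv') z 1
  have : Nontrivial (Module.End.eigenspace (Matrix.toLin' B) z) :=
    Submodule.nontrivial_iff_ne_bot.mpr hz
  obtain ⟨μ, hμ⟩ := Module.End.exists_eigenvalue ((Matrix.toLin' M).restrict hmaps)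
  obtain ⟨⟨v, hv⟩, hv1⟩ := hμ.exists_hasEigenvector
  have hv0 : v ≠ 0 := fun h0 => hv1.2 (by simpa using h0)
  have hvB : B.mulVec v = z • v := by simpa using Module.End.mem_eigenspace_iff.mp hv
  have hvM : M.mulVec v = μ • v := by
    exact congrArg Subtype.val hv1.apply_eq_smul
  refine ⟨v, hv0, hvB, μ, ?_, hvM⟩
  rw [← Matrix.spectrum_toLin']
  exact (Module.End.hasEigenvalue_of_hasEigenvector
    (Module.End.hasEigenvector_iff.mpr ⟨Module.End.mem_eigenspace_iff.mpr (by simpa using hvM), hv0⟩)).mem_spectrum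

theorem nilp_of_spec {n : ℕ} (N : Matrix (Fin n) (Fin n) ℂ) (h : ∀ z ∈ spectrum ℂ N, z = 0) :
    IsNilpotent N := by
  have hroots : N.charpoly.roots = Multiset.replicate N.charpoly.roots.card 0 := by
    rw [Multiset.eq_replicate]
    refine ⟨rfl, fun z hz => h z ?_⟩
    rw [Matrix.mem_spectrum_iff_isRoot_charpoly]
    exact (Polynomial.mem_roots'.mp hz).2
  have hs := (IsAlgClosed.splits N.charpoly).eq_prod_roots_of_monic N.charpoly_monic
  rw [hroots] at hs
  refine ⟨N.charpoly.roots.card, ?_⟩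
  have := Matrix.aeval_self_charpoly N
  rw [hs] at this
  simpa using this

theorem exists_real_log_poly (s : Set ℂ) (hs : s.Finite) (h : ∀ μ ∈ s, μ ∈ Complex.slitPlane) :
    ∃ r : Polynomial ℝ, ∀ μ ∈ s, Polynomial.aeval μ r = Complex.log μ := by
  classical
  obtain ⟨Q, hQ⟩ : ∃ Q : Polynomial ℂ, ∀ μ ∈ s, Q.eval μ = Complex.log μ ∧
      Q.eval (starRingEnd ℂ μ) = Complex.log (starRingEnd ℂ μ) := by
    refine ⟨Lagrange.interpolate (hs.toFinset ∪ hs.toFinset.image (starRingEnd ℂ)) id Complex.log,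
      fun μ hμ => ⟨?_, ?_⟩⟩
    · exact Lagrange.eval_interpolate_at_node (v := id) _ (Set.injOn_id _) (by simp [hμ])
    · exact Lagrange.eval_interpolate_at_node (v := id) _ (Set.injOn_id _)
        (Finset.mem_union_right _ (Finset.mem_image_of_mem _ (by simpa using hμ)))
  have hl : Polynomial.C (1 / 2 : ℂ) * (Q + Q.map (starRingEnd ℂ)) ∈
      Polynomial.lifts (algebraMap ℝ ℂ) := by
    rw [Polynomial.lifts_iff_coeff_lifts]
    intro k
    refine ⟨(Q.coeff k).re, ?_⟩
    rw [Polynomial.coeff_C_mul, Polynomial.coeff_add, Polynomial.coeff_map, Complex.add_conj]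
    simp
  obtain ⟨r, hr⟩ := (Polynomial.mem_lifts _).mp hl
  refine ⟨r, fun μ hμ => ?_⟩
  have hc : (Q.map (starRingEnd ℂ)).eval μ = Complex.log μ := by
    have h1 := Polynomial.eval_map_apply (f := starRingEnd ℂ) (p := Q) (starRingEnd ℂ μ)
    rw [Complex.conj_conj] at h1
    rw [h1, (hQ μ hμ).2, Complex.log_conj _ (Complex.mem_slitPlane_iff_arg.mp (h μ hμ)).1,
      Complex.conj_conj]
  rw [Polynomial.aeval_def, ← Polynomial.eval_map, hr, Polynomial.eval_mul, Polynomial.eval_add,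
    hc, (hQ μ hμ).1, Polynomial.eval_C]
  ring

theorem aeval_mulVec_eigen {n : ℕ} (M : Matrix (Fin n) (Fin n) ℂ) (r : Polynomial ℝ)
    (v : Fin n → ℂ) (μ : ℂ) (h : M.mulVec v = μ • v) :
    (Polynomial.aeval M r).mulVec v = Polynomial.aeval μ r • v := by
  have hpow : ∀ k : ℕ, (M ^ k).mulVec v = μ ^ k • v := by
    intro k
    induction k with
    | zero => simp
    | succ k ih => rw [pow_succ, ← Matrix.mulVec_mulVec, h, Matrix.mulVec_smul, ih, smul_smul,
        pow_succ, mul_comm]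
  induction r using Polynomial.induction_on' with
  | add p q hp hq => simp [Matrix.add_mulVec, hp, hq, add_smul]
  | monomial k a =>
    rw [Polynomial.aeval_monomial, Polynomial.aeval_monomial, ← Algebra.smul_def,
      ← Algebra.smul_def, Matrix.smul_mulVec, hpow, smul_assoc]

/-- **Real principal logarithm.**
Let `A` be an invertible `n×n` real matrix such that no eigenvalue of `A` (viewed as a complex
matrix) lies on the closed negative real axis `(-∞, 0]`. Then there exists an `n×n` real matrix
`X` with `exp(X) = A` and such that every eigenvalue `z` of `X` (viewed as a complex matrix)
satisfies `-π < Im z < π`. -/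
theorem real_principal_log_exists (n : ℕ)
    (A : Matrix (Fin n) (Fin n) ℝ) (hA : IsUnit A)
    (hspec : ∀ μ ∈ spectrum ℂ (A.map (algebraMap ℝ ℂ)), ¬(μ.im = 0 ∧ μ.re ≤ 0)) :
    ∃ X : Matrix (Fin n) (Fin n) ℝ,
      NormedSpace.exp X = A ∧
        ∀ z ∈ spectrum ℂ (X.map (algebraMap ℝ ℂ)), -Real.pi < z.im ∧ z.im < Real.pi := by
  let φ : Matrix (Fin n) (Fin n) ℝ →ₐ[ℝ] Matrix (Fin n) (Fin n) ℂ :=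
    (Algebra.ofId ℝ ℂ).mapMatrix
  have hφ : ∀ Y, φ Y = Y.map (algebraMap ℝ ℂ) := fun Y => rfl
  have hφinj : Function.Injective φ := fun Y Z h =>
    Matrix.map_injective (algebraMap ℝ ℂ).injective h
  have hφexp : ∀ Y, φ (NormedSpace.exp Y) = NormedSpace.exp (φ Y) := by
    intro Y
    open scoped Matrix.Norms.Operator in
    exact NormedSpace.map_exp φ (LinearMap.continuous_of_finiteDimensional φ.toLinearMap) Y
  simp only [← hφ] at hspec ⊢
  set M := φ A with hM
  have hslit : ∀ μ ∈ spectrum ℂ M, μ ∈ Complex.slitPlane := by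
    intro μ hμ
    have := hspec μ hμ
    rw [Complex.mem_slitPlane_iff]
    by_contra! hcon
    exact this ⟨hcon.2, hcon.1⟩
  have hfin : (spectrum ℂ M).Finite := by
    rw [← Matrix.spectrum_toLin']
    exact Module.End.finite_spectrum _
  obtain ⟨r, hr⟩ := exists_real_log_poly _ hfin hslit
  set X0 := Polynomial.aeval A r with hX0
  have hX0M : φ X0 = Polynomial.aeval M r := by
    rw [hX0, hM, Polynomial.aeval_algHom_apply]
  have hAX0 : Commute A X0 := by
    have := Polynomial.aeval_X (R := ℝ) A
    nth_rewrite 1 [← this]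
    rw [Commute, SemiconjBy, hX0, ← map_mul, ← map_mul, mul_comm]
  have hE : Commute A (NormedSpace.exp (-X0)) := hAX0.neg_right.exp_right
  set N := NormedSpace.exp (-X0) * A - 1 with hN
  have hAN : Commute A N := (hE.mul_right (Commute.refl A)).sub_right (Commute.one_right A)
  have hXN : Commute X0 N :=
    ((Commute.refl X0).neg_right.exp_right.mul_right hAX0.symm).sub_right (Commute.one_right X0)
  have hNnil : IsNilpotent N := by
    rw [← IsNilpotent.map_iff hφinj]
    apply nilp_of_spec
    intro z hz
    obtain ⟨v, hv0, hvN, μ, hμ, hvM⟩ := common_eigen (φ N) M (hAN.symm.map φ) z hz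
    have h1 := aeval_mulVec_eigen M r v μ hvM
    rw [← hX0M, hr μ hμ] at h1
    have h2 : (φ (-X0)).mulVec v = (-Complex.log μ) • v := by
      rw [map_neg, Matrix.neg_mulVec, h1, neg_smul]
    have h3 := exp_mulVec_eigen _ _ _ h2
    have hμ0 : μ ≠ 0 := Complex.slitPlane_ne_zero (hslit μ hμ)
    have h4 : (φ N).mulVec v = 0 := by
      rw [hN, map_sub, map_mul, hφexp, map_one, Matrix.sub_mulVec, ← Matrix.mulVec_mulVec, ← hM,
        hvM, Matrix.mulVec_smul, h3, smul_smul, Complex.exp_neg, Complex.exp_log hμ0,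
        mul_inv_cancel₀ hμ0]
      simp
    rw [h4] at hvN
    exact (smul_eq_zero.mp hvN.symm).resolve_right hv0
  obtain ⟨k, hk⟩ := hNnil
  obtain ⟨L, hL, hLc, hLe⟩ := unipotent_log k N (by rw [pow_succ, hk, zero_mul])
  have hX0L := hLc X0 hXN
  have hAL := hLc A hAN
  refine ⟨X0 + L, ?_, ?_⟩
  · rw [Matrix.exp_add_of_commute _ _ hX0L, exp_eq_nilp_exp L hL, hLe, hN, add_sub_cancel,
      ← mul_assoc, ← Matrix.exp_add_of_commute _ _ (Commute.refl X0).neg_right]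
    simp
  · intro z hz
    obtain ⟨v, hv0, hvX, μ, hμ, hvM⟩ := common_eigen (φ (X0 + L)) M
      ((hAX0.add_right hAL).symm.map φ) z hz
    have h1 := aeval_mulVec_eigen M r v μ hvM
    rw [← hX0M, hr μ hμ] at h1
    have h2 : (φ L).mulVec v = (z - Complex.log μ) • v := by
      rw [map_add, Matrix.add_mulVec, h1] at hvX
      rw [sub_smul, ← hvX]; abel
    obtain ⟨j, hj⟩ := hL.map φ
    have h3 := aeval_mulVec_eigen (φ L) (Polynomial.X ^ j) v _ h2
    simp only [map_pow, Polynomial.aeval_X, hj, Matrix.zero_mulVec] at h3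
    have h5 : z - Complex.log μ = 0 :=
      eq_zero_of_pow_eq_zero ((smul_eq_zero.mp h3.symm).resolve_right hv0)
    rw [sub_eq_zero.mp h5, Complex.log_im]
    exact ⟨Complex.neg_pi_lt_arg _, lt_of_le_of_ne (Complex.arg_le_pi _)
      (Complex.mem_slitPlane_iff_arg.mp (hslit μ hμ)).1⟩
end

section
/- Let J₀ be the standard 2n×2n symplectic matrix, given in block form by J₀ = [[0, -Iₙ],[Iₙ, 0]]. Let A be a real 2n×2n symplectic matrix, i.e. Aᵀ J₀ A = J₀, such that no eigenvalue of A lies on the closed negative real axis (-∞, 0]. If X is a real 2n×2n matrix with exp(X) = A and every eigenvalue z of X satisfies -π < Im(z) < π, then X is infinitesimally symplectic: J₀ X + Xᵀ J₀ = 0. -/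
open NormedSpace Matrix

/-- A nonzero invariant subspace contains an eigenvector. -/
lemma aux_exists_eigenvector {V : Type*} [AddCommGroup V] [Module ℂ V] [FiniteDimensional ℂ V]
    (W : Submodule ℂ V) (hW : ∃ w ∈ W, w ≠ 0) (f : V →ₗ[ℂ] V) (hf : ∀ w ∈ W, f w ∈ W) :
    ∃ c : ℂ, ∃ w ∈ W, w ≠ 0 ∧ f w = c • w := by
  obtain ⟨w0, hw0, hne⟩ := hW
  haveI : Nontrivial W := ⟨⟨w0, hw0⟩, 0, fun h => hne (congrArg Subtype.val h)⟩
  obtain ⟨c, hc⟩ := Module.End.exists_eigenvalue (f.restrict hf : Module.End ℂ W)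
  obtain ⟨v, hv⟩ := hc.exists_hasEigenvector
  refine ⟨c, v, v.2, fun h => hv.2 (Subtype.ext h), ?_⟩
  have := congrArg Subtype.val hv.apply_eq_smul
  simpa using this

lemma aux_phi_ne_zero (c : ℂ) (h1 : -(2 * Real.pi) < c.im) (h2 : c.im < 2 * Real.pi) :
    (∫ t in (0:ℝ)..1, Complex.exp (c * t)) ≠ 0 := by
  by_cases hc : c = 0
  · simp [hc]
  · rw [integral_exp_mul_complex hc]
    intro h
    have h3 : Complex.exp c = 1 := by
      have := (div_eq_zero_iff.mp h).resolve_right hc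
      simpa [sub_eq_zero] using this
    obtain ⟨k, hk⟩ := Complex.exp_eq_one_iff.mp h3
    have him : c.im = k * (2 * Real.pi) := by simp [hk]
    have hpi := Real.pi_pos
    have hk1 : (-1 : ℝ) < k := by nlinarith
    have hk2 : (k : ℝ) < 1 := by nlinarith
    have hk0 : k = 0 := by
      have a1 : (-1 : ℤ) < k := by exact_mod_cast hk1
      have a2 : k < (1 : ℤ) := by exact_mod_cast hk2
      omega
    exact hc (by simp [hk, hk0])

section
variable {𝔸 : Type*} [NormedRing 𝔸] [NormedAlgebra ℂ 𝔸] [CompleteSpace 𝔸]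

lemma aux_exp_mul_left (X Z : 𝔸) (a : ℂ) (h : X * Z = a • Z) (t : ℝ) :
    exp (t • X) * Z = Complex.exp (a * t) • Z := by
  let _ : NormedAlgebra ℚ 𝔸 := .restrictScalars ℚ ℂ 𝔸
  have hs : SemiconjBy Z (algebraMap ℂ 𝔸 (a * t)) (t • X) := by
    unfold SemiconjBy
    rw [← Algebra.commutes, ← Algebra.smul_def, smul_mul_assoc, h, mul_comm, mul_smul]
    simp
  have := hs.exp_right
  unfold SemiconjBy at this
  rw [← this, ← algebraMap_exp_comm, ← Algebra.commutes, ← Algebra.smul_def,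
    Complex.exp_eq_exp_ℂ]

lemma aux_exp_mul_right (Y Z : 𝔸) (b : ℂ) (h : Z * Y = b • Z) (t : ℝ) :
    Z * exp (t • Y) = Complex.exp (b * t) • Z := by
  let _ : NormedAlgebra ℚ 𝔸 := .restrictScalars ℚ ℂ 𝔸
  have hs : SemiconjBy Z (t • Y) (algebraMap ℂ 𝔸 (b * t)) := by
    unfold SemiconjBy
    rw [← Algebra.smul_def, mul_smul_comm, h, mul_comm, mul_smul]
    simp
  have := hs.exp_right
  unfold SemiconjBy at this
  rw [this, ← algebraMap_exp_comm, ← Algebra.smul_def, Complex.exp_eq_exp_ℂ]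

lemma aux_mem_spectrum_left (X Z : 𝔸) (a : ℂ) (h : X * Z = a • Z) (hZ : Z ≠ 0) :
    a ∈ spectrum ℂ X := by
  rw [spectrum.mem_iff]
  intro hu
  apply hZ
  have h0 : (algebraMap ℂ 𝔸 a - X) * Z = 0 := by
    rw [sub_mul, h, ← Algebra.smul_def, sub_self]
  exact (hu.mul_right_eq_zero).mp h0

lemma aux_mem_spectrum_right (Y Z : 𝔸) (b : ℂ) (h : Z * Y = b • Z) (hZ : Z ≠ 0) :
    b ∈ spectrum ℂ Y := by
  rw [spectrum.mem_iff]
  intro hu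
  apply hZ
  have h0 : Z * (algebraMap ℂ 𝔸 b - Y) = 0 := by
    rw [mul_sub, h, ← Algebra.commutes, ← Algebra.smul_def, sub_self]
  exact (hu.mul_left_eq_zero).mp h0

end

lemma aux_log_unique {𝔸 : Type*} [NormedRing 𝔸] [NormedAlgebra ℂ 𝔸] [FiniteDimensional ℂ 𝔸]
    (X Y : 𝔸) (hexp : exp X = exp Y)
    (hX : ∀ μ ∈ spectrum ℂ X, -Real.pi < μ.im ∧ μ.im < Real.pi)
    (hY : ∀ μ ∈ spectrum ℂ Y, -Real.pi < μ.im ∧ μ.im < Real.pi) : X = Y := by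
  haveI : CompleteSpace 𝔸 := FiniteDimensional.complete ℂ 𝔸
  let _ : NormedAlgebra ℚ 𝔸 := .restrictScalars ℚ ℂ 𝔸
  have hcE : ∀ W : 𝔸, Continuous (fun t : ℝ => exp (t • W)) := fun W =>
    continuous_iff_continuousAt.mpr fun t => (hasDerivAt_exp_smul_const W t).continuousAt
  have hcont : ∀ Z : 𝔸, Continuous (fun t : ℝ => exp (t • X) * Z * exp (t • (-Y))) := fun Z =>
    ((hcE X).mul continuous_const).mul (hcE (-Y))
  have hint : ∀ Z : 𝔸, IntervalIntegrable (fun t : ℝ => exp (t • X) * Z * exp (t • (-Y)))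
      MeasureTheory.volume 0 1 := fun Z => (hcont Z).intervalIntegrable _ _
  let T : 𝔸 → 𝔸 := fun Z => ∫ t in (0:ℝ)..1, exp (t • X) * Z * exp (t • (-Y))
  have hTX : ∀ Z, T (X * Z) = X * T Z := by
    intro Z
    have := (ContinuousLinearMap.mul ℝ 𝔸 X).intervalIntegral_comp_comm (hint Z)
    simp only [ContinuousLinearMap.mul_apply'] at this
    simp only [T]
    rw [← this]
    congr 1
    ext t
    have hc : exp (t • X) * X = X * exp (t • X) :=
      (((Commute.refl X).smul_left t).exp_left).eq
    simp only [← mul_assoc, hc]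
  have hTY : ∀ Z, T (Z * Y) = T Z * Y := by
    intro Z
    have := ((ContinuousLinearMap.mul ℝ 𝔸).flip Y).intervalIntegral_comp_comm (hint Z)
    simp only [ContinuousLinearMap.mul_apply', ContinuousLinearMap.flip_apply] at this
    simp only [T]
    rw [← this]
    congr 1
    ext t
    have hc : exp (t • (-Y)) * Y = Y * exp (t • (-Y)) :=
      (((Commute.refl Y).neg_left.smul_left t).exp_left).eq
    simp only [mul_assoc, hc]
  let K : Submodule ℂ 𝔸 :=
    { carrier := {Z | T Z = 0}
      zero_mem' := by simp [T]
      add_mem' := by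
        intro a b ha hb
        have : T (a + b) = T a + T b := by
          simp only [T]
          rw [← intervalIntegral.integral_add (hint a) (hint b)]
          congr 1; ext t; noncomm_ring
        simp only [Set.mem_ofPred_eq] at *
        rw [this, ha, hb, add_zero]
      smul_mem' := by
        intro c a ha
        have : T (c • a) = c • T a := by
          simp only [T]
          rw [← intervalIntegral.integral_smul]
          congr 1; ext t; simp
        simp only [Set.mem_ofPred_eq] at *
        rw [this, ha, smul_zero] }
  have hK : ∀ Z, Z ∈ K ↔ T Z = 0 := fun Z => Iff.rfl
  have hXY : X - Y ∈ K := by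
    rw [hK]
    have hd : ∀ t : ℝ, HasDerivAt (fun u : ℝ => exp (u • X) * exp (u • (-Y)))
        (exp (t • X) * (X - Y) * exp (t • (-Y))) t := by
      intro t
      have := (hasDerivAt_exp_smul_const X t).mul (hasDerivAt_exp_smul_const' (-Y) t)
      refine this.congr_deriv ?_
      noncomm_ring
    have := intervalIntegral.integral_eq_sub_of_hasDerivAt (fun t _ => hd t) (hint (X - Y))
    simp only [T]
    rw [this]
    have h1 : exp Y * exp (-Y) = 1 := by
      rw [← exp_add_of_commute (Commute.refl Y).neg_right]; simp
    simp [hexp, h1]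
  by_contra hne
  obtain ⟨a, Z0, hZ0, hZ0ne, hZ0e⟩ := aux_exists_eigenvector K ⟨X - Y, hXY, sub_ne_zero.mpr hne⟩
    (LinearMap.mulLeft ℂ X) (by
      intro w hw
      rw [hK] at *
      rw [LinearMap.mulLeft_apply, hTX, hw, mul_zero])
  obtain ⟨b, Z, hZ, hZne, hZe⟩ := aux_exists_eigenvector
    (K ⊓ Module.End.eigenspace (LinearMap.mulLeft ℂ X) a)
    ⟨Z0, ⟨hZ0, Module.End.mem_eigenspace_iff.mpr hZ0e⟩, hZ0ne⟩
    (LinearMap.mulRight ℂ Y) (by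
      rintro w ⟨hw1, hw2⟩
      refine ⟨?_, ?_⟩
      · change w ∈ K at hw1
        change _ ∈ K
        rw [hK] at *
        rw [LinearMap.mulRight_apply, hTY, hw1, zero_mul]
      · have hw3 := Module.End.mem_eigenspace_iff.mp hw2
        refine Module.End.mem_eigenspace_iff.mpr ?_
        simp only [LinearMap.mulLeft_apply, LinearMap.mulRight_apply] at *
        rw [← mul_assoc, hw3, smul_mul_assoc])
  have hZX : X * Z = a • Z := Module.End.mem_eigenspace_iff.mp hZ.2
  have hZY : Z * Y = b • Z := hZe
  have ha := hX a (aux_mem_spectrum_left X Z a hZX hZne)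
  have hb := hY b (aux_mem_spectrum_right Y Z b hZY hZne)
  have hT : T Z = (∫ t in (0:ℝ)..1, Complex.exp ((a - b) * t)) • Z := by
    rw [← intervalIntegral.integral_smul_const]
    simp only [T]
    congr 1
    ext t
    rw [aux_exp_mul_left X Z a hZX, smul_mul_assoc,
      aux_exp_mul_right (-Y) Z (-b) (by rw [mul_neg, hZY, neg_smul]), smul_smul, ← Complex.exp_add]
    ring_nf
  have h0 : T Z = 0 := hZ.1
  rw [hT] at h0
  refine aux_phi_ne_zero (a - b) ?_ ?_ ((smul_eq_zero.mp h0).resolve_right hZne)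
  · simp only [Complex.sub_im]; linarith [ha.1, hb.2]
  · simp only [Complex.sub_im]; linarith [ha.2, hb.1]

/-- **The principal logarithm of a symplectic matrix is infinitesimally symplectic.**
Let `J₀ = [[0, -Iₙ],[Iₙ, 0]]` be the standard `2n×2n` symplectic matrix. Let `A` be a real
`2n×2n` symplectic matrix (`Aᵀ J₀ A = J₀`) such that no eigenvalue of `A` lies on the closed
negative real axis `(-∞, 0]`. If `X` is a real `2n×2n` matrix with `exp(X) = A` and every
eigenvalue `z` of `X` satisfies `-π < Im z < π`, then `J₀ X + Xᵀ J₀ = 0`. -/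
theorem principal_log_of_symplectic_is_infinitesimally_symplectic (n : ℕ)
    (J₀ : Matrix (Fin n ⊕ Fin n) (Fin n ⊕ Fin n) ℝ)
    (hJ : J₀ = Matrix.fromBlocks 0 (-1) 1 0)
    (A X : Matrix (Fin n ⊕ Fin n) (Fin n ⊕ Fin n) ℝ)
    (hA : Aᵀ * J₀ * A = J₀)
    (hspecA : ∀ μ ∈ spectrum ℂ (A.map (algebraMap ℝ ℂ)), ¬(μ.im = 0 ∧ μ.re ≤ 0))
    (hexp : NormedSpace.exp X = A)
    (hspecX : ∀ μ ∈ spectrum ℂ (X.map (algebraMap ℝ ℂ)),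
      -Real.pi < μ.im ∧ μ.im < Real.pi) :
    J₀ * X + Xᵀ * J₀ = 0 := by
  classical
  letI : NormedRing (Matrix (Fin n ⊕ Fin n) (Fin n ⊕ Fin n) ℂ) := Matrix.linftyOpNormedRing
  letI : NormedAlgebra ℂ (Matrix (Fin n ⊕ Fin n) (Fin n ⊕ Fin n) ℂ) :=
    Matrix.linftyOpNormedAlgebra
  have hJJ : J₀ * J₀ = -1 := by
    rw [hJ, Matrix.fromBlocks_multiply, ← Matrix.fromBlocks_one, Matrix.fromBlocks_neg]
    simp
  have hJinv1 : J₀ * (-J₀) = 1 := by rw [mul_neg, hJJ, neg_neg]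
  have hJinv2 : (-J₀) * J₀ = 1 := by rw [neg_mul, hJJ, neg_neg]
  let U : (Matrix (Fin n ⊕ Fin n) (Fin n ⊕ Fin n) ℝ)ˣ := ⟨J₀, -J₀, hJinv1, hJinv2⟩
  -- the candidate logarithm
  let Y : Matrix (Fin n ⊕ Fin n) (Fin n ⊕ Fin n) ℝ := (-J₀) * (-Xᵀ) * J₀
  have hexpY : exp Y = exp X := by
    have h1 : exp Y = (-J₀) * exp (-Xᵀ) * J₀ := Matrix.exp_units_conj' U (-Xᵀ)
    rw [h1, Matrix.exp_neg, Matrix.exp_transpose, hexp]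
    have hdet : IsUnit (Aᵀ) := by
      rw [← hexp, ← Matrix.exp_transpose]; exact Matrix.isUnit_exp _
    have hdet2 : IsUnit (Aᵀ).det := (Matrix.isUnit_iff_isUnit_det _).mp hdet
    have h2 : J₀ * A = (Aᵀ)⁻¹ * J₀ := by
      nth_rewrite 2 [← hA]
      rw [mul_assoc, ← mul_assoc, Matrix.nonsing_inv_mul _ hdet2, one_mul]
    rw [mul_assoc, ← h2, ← mul_assoc, hJinv2, one_mul]
  let φ : Matrix (Fin n ⊕ Fin n) (Fin n ⊕ Fin n) ℝ →+* Matrix (Fin n ⊕ Fin n) (Fin n ⊕ Fin n) ℂ :=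
    (algebraMap ℝ ℂ).mapMatrix
  have hφc : Continuous φ := continuous_id.matrix_map Complex.continuous_ofReal
  have hφexp : ∀ M, φ (exp M) = exp (φ M) := by
    intro M
    open scoped Norms.Operator in exact map_exp φ hφc M
  have hspecY : ∀ μ ∈ spectrum ℂ (φ Y), -μ ∈ spectrum ℂ (φ X) := by
    intro μ hμ
    rw [spectrum.mem_iff] at hμ ⊢
    intro hu
    apply hμ
    have e1 : φ Y = φ (-J₀) * (-(φ X)ᵀ) * φ J₀ := by
      have : φ (Xᵀ) = (φ X)ᵀ := rfl
      simp only [Y, map_mul, map_neg, this]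
    have e2 : φ (-J₀) * φ J₀ = 1 := by rw [← map_mul, hJinv2, map_one]
    have e3 : φ J₀ * φ (-J₀) = 1 := by rw [← map_mul, hJinv1, map_one]
    have e4 : algebraMap ℂ _ μ - φ Y
        = φ (-J₀) * (-(algebraMap ℂ _ (-μ) - φ X)ᵀ) * φ J₀ := by
      rw [e1, Matrix.transpose_sub, Algebra.algebraMap_eq_smul_one, Algebra.algebraMap_eq_smul_one,
        Matrix.transpose_smul, Matrix.transpose_one, neg_smul]
      have : φ (-J₀) * (-(-(μ • (1 : Matrix (Fin n ⊕ Fin n) (Fin n ⊕ Fin n) ℂ)) - (φ X)ᵀ)) * φ J₀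
        = μ • (φ (-J₀) * φ J₀) - φ (-J₀) * (-(φ X)ᵀ) * φ J₀ := by
        simp [mul_add, add_mul]
        abel
      rw [this, e2]
    rw [e4]
    have u1 : IsUnit (φ (-J₀)) := ⟨⟨_, _, e2, e3⟩, rfl⟩
    have u2 : IsUnit (φ J₀) := ⟨⟨_, _, e3, e2⟩, rfl⟩
    have u3 := (Matrix.isUnit_transpose _).mpr hu
    exact (u1.mul u3.neg).mul u2
  have key : φ X = φ Y := by
    apply aux_log_unique (φ X) (φ Y)
    · exact ((hφexp X).symm.trans ((congrArg φ hexpY).symm.trans (hφexp Y)))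
    · exact hspecX
    · intro μ hμ
      have := hspecX _ (hspecY μ hμ)
      rw [Complex.neg_im] at this
      constructor <;> linarith [this.1, this.2]
  have hXY : X = Y := by
    ext i j
    have := congrFun (congrFun key i) j
    exact Complex.ofReal_injective this
  have : J₀ * X = -(Xᵀ * J₀) := by
    calc J₀ * X = J₀ * Y := by rw [← hXY]
      _ = (J₀ * (-J₀)) * (-Xᵀ) * J₀ := by simp only [Y, mul_assoc]
      _ = -(Xᵀ * J₀) := by rw [hJinv1, one_mul, neg_mul]
  rw [this, neg_add_cancel]
end

section
/- Let A be an n×n complex matrix none of whose eigenvalues lies on the closed negative real axis (-∞, 0]. Then for every t ∈ [0,1] the matrix t(A - I) + I is invertible, and the matrix X := ∫₀¹ (A - I)·(t(A - I) + I)⁻¹ dt satisfies exp(X) = A. -/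
open NormedSpace Matrix

attribute [local instance] Matrix.normedAddCommGroup Matrix.normedSpace

theorem pl_general {𝔸 : Type*} [NormedRing 𝔸] [NormedAlgebra ℝ 𝔸] [CompleteSpace 𝔸]
    (X f : ℝ → 𝔸) (B : 𝔸) (h0 : X 0 = 0)
    (hX : ∀ s ∈ Set.Icc (0:ℝ) 1, HasDerivAt X (f s) s)
    (hc : ∀ s r, Commute (X s) (X r))
    (hf : ∀ s ∈ Set.Icc (0:ℝ) 1, f s * (s • B + 1) = B) :
    NormedSpace.exp (X 1) = B + 1 := by
  let _ : NormedAlgebra ℚ 𝔸 := NormedAlgebra.restrictScalars ℚ ℝ 𝔸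
  have hE : ∀ s ∈ Set.Icc (0:ℝ) 1,
      HasDerivAt (fun u => NormedSpace.exp (-X u)) (NormedSpace.exp (-X s) * (-f s)) s := by
    intro s hs
    have h1 : HasDerivAt (fun u => X s - X u) (-f s) s := (hX s hs).const_sub (X s)
    have h2 : HasFDerivAt (NormedSpace.exp : 𝔸 → 𝔸) (1 : 𝔸 →L[ℝ] 𝔸) (X s - X s) := by
      rw [sub_self]; exact hasFDerivAt_exp_zero
    have h3 := (h2.comp_hasDerivAt s h1).const_mul (NormedSpace.exp (-X s))
    have h4 : (fun u => NormedSpace.exp (-X u)) =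
        fun u => NormedSpace.exp (-X s) * NormedSpace.exp (X s - X u) := by
      funext u
      rw [← NormedSpace.exp_add_of_commute]
      · congr 1; abel
      · exact ((Commute.refl _).sub_right (hc s u)).neg_left
    rw [h4]
    simpa using h3
  have hg : ∀ s ∈ Set.Icc (0:ℝ) 1,
      HasDerivAt (fun u : ℝ => NormedSpace.exp (-X u) * (u • B + 1)) 0 s := by
    intro s hs
    have h5 : HasDerivAt (fun u : ℝ => u • B + 1) B s := by
      simpa using ((hasDerivAt_id s).smul_const B).add_const 1
    have h6 := (hE s hs).mul h5
    have h8 : NormedSpace.exp (-X s) * -f s * (s • B + 1) + NormedSpace.exp (-X s) * B = 0 := by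
      rw [mul_assoc, neg_mul, hf s hs]
      simp
    rw [h8] at h6
    exact h6
  have key := constant_of_has_deriv_right_zero
    (f := fun u : ℝ => NormedSpace.exp (-X u) * (u • B + 1)) (a := 0) (b := 1)
    (fun s hs => (hg s hs).continuousAt.continuousWithinAt)
    (fun s hs => (hg s ⟨hs.1, hs.2.le⟩).hasDerivWithinAt) 1 (by simp)
  simp only [h0, neg_zero, NormedSpace.exp_zero, zero_smul, one_smul, zero_add, mul_one] at key
  have h7 : NormedSpace.exp (X 1) * NormedSpace.exp (-X 1) = 1 := by
    rw [← NormedSpace.exp_add_of_commute (Commute.refl _).neg_right]; simp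
  calc NormedSpace.exp (X 1) = NormedSpace.exp (X 1) * (NormedSpace.exp (-X 1) * (B + 1)) := by
        rw [key, mul_one]
    _ = B + 1 := by rw [← mul_assoc, h7, one_mul]

section linf
attribute [local instance] Matrix.linftyOpNormedRing Matrix.linftyOpNormedAlgebra

theorem pl_matrix {n : ℕ} (X f : ℝ → Matrix (Fin n) (Fin n) ℂ) (B : Matrix (Fin n) (Fin n) ℂ)
    (h0 : X 0 = 0)
    (hX : ∀ s ∈ Set.Icc (0:ℝ) 1, HasDerivAt X (f s) s)
    (hc : ∀ s r, Commute (X s) (X r))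
    (hf : ∀ s ∈ Set.Icc (0:ℝ) 1, f s * (s • B + 1) = B) :
    NormedSpace.exp (X 1) = B + 1 :=
  @pl_general _ _ _ (FiniteDimensional.complete ℝ _) X f B h0 hX hc hf
end linf

theorem pl_unit {n : ℕ} (A : Matrix (Fin n) (Fin n) ℂ)
    (hspec : ∀ μ ∈ spectrum ℂ A, ¬(μ.im = 0 ∧ μ.re ≤ 0)) (t : ℝ) (ht : t ∈ Set.Icc (0:ℝ) 1) :
    IsUnit ((t : ℂ) • (A - 1) + 1) := by
  rcases eq_or_lt_of_le ht.1 with h | h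
  · simp [← h]
  have ht0 : (t : ℂ) ≠ 0 := by exact_mod_cast h.ne'
  set μ : ℂ := ((1 - 1 / t : ℝ) : ℂ) with hμ
  have hn : μ ∉ spectrum ℂ A := fun hm => hspec μ hm ⟨by rw [hμ, Complex.ofReal_im], by
    rw [hμ, Complex.ofReal_re]
    have : 1 ≤ 1 / t := by rw [le_div_iff₀ h]; linarith [ht.2]
    linarith⟩
  rw [spectrum.notMem_iff] at hn
  have h2 : (t : ℂ) • (A - 1) + 1 =
      (Units.mk0 (-(t : ℂ)) (neg_ne_zero.2 ht0)) •
        (algebraMap ℂ (Matrix (Fin n) (Fin n) ℂ) μ - A) := by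
    rw [Units.smul_def, Units.val_mk0, Algebra.algebraMap_eq_smul_one, smul_sub (-(t : ℂ)), smul_smul]
    have : -(t : ℂ) * μ = 1 - t := by
      rw [hμ]; push_cast; field_simp; ring
    rw [this]
    module
  rw [h2]
  exact hn.smul _

theorem pl_int_zero {E : Type*} [NormedAddCommGroup E] [NormedSpace ℝ E] [FiniteDimensional ℝ E]
    (L : E →ₗ[ℝ] E) (f : ℝ → E) (h : ∀ t, L (f t) = 0) (s : ℝ) :
    L (∫ t in (0:ℝ)..s, f t) = 0 := by
  have : CompleteSpace E := FiniteDimensional.complete ℝ E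
  by_cases hi : IntervalIntegrable f MeasureTheory.volume 0 s
  · have := (LinearMap.toContinuousLinearMap L).intervalIntegral_comp_comm hi
    simpa [h] using this.symm
  · rw [intervalIntegral.integral_undef hi, map_zero]

theorem pl_deriv {E : Type*} [NormedAddCommGroup E] [NormedSpace ℝ E] [FiniteDimensional ℝ E]
    (f : ℝ → E) (U : Set ℝ) (hUo : IsOpen U) (hUI : Set.Icc (0:ℝ) 1 ⊆ U) (hfc : ContinuousOn f U)
    (s : ℝ) (hs : s ∈ Set.Icc (0:ℝ) 1) :
    HasDerivAt (fun s => ∫ t in (0:ℝ)..s, f t) (f s) s := by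
  have : CompleteSpace E := FiniteDimensional.complete ℝ E
  refine intervalIntegral.integral_hasDerivAt_right ?_ ?_ ?_
  · refine (hfc.mono ?_).intervalIntegrable
    rw [Set.uIcc_of_le hs.1]
    exact (Set.Icc_subset_Icc_right hs.2).trans hUI
  · exact hfc.stronglyMeasurableAtFilter hUo s (hUI hs)
  · exact hfc.continuousAt (hUo.mem_nhds (hUI hs))

theorem pl_comm_int {n : ℕ} (C : Matrix (Fin n) (Fin n) ℂ) (f : ℝ → Matrix (Fin n) (Fin n) ℂ)
    (h : ∀ t, Commute C (f t)) (s : ℝ) : Commute C (∫ t in (0:ℝ)..s, f t) := by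
  have := pl_int_zero (LinearMap.mulLeft ℝ C - LinearMap.mulRight ℝ C) f
    (fun t => by simp [(h t).eq]) s
  exact sub_eq_zero.1 this

theorem pl_comm_inv {n : ℕ} (C M : Matrix (Fin n) (Fin n) ℂ) (h : Commute C M) :
    Commute C M⁻¹ := by
  rw [← Matrix.zpow_neg_one]
  exact Matrix.Commute.zpow_right h _

/-- **Integral representation of the principal logarithm.**
Let `A` be an `n×n` complex matrix none of whose eigenvalues lies on the closed negative real
axis `(-∞, 0]`. Then for every `t ∈ [0,1]` the matrix `t(A - I) + I` is invertible, and the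
matrix `X := ∫₀¹ (A - I)·(t(A - I) + I)⁻¹ dt` satisfies `exp(X) = A`. -/
theorem principal_log_integral_repr (n : ℕ)
    (A : Matrix (Fin n) (Fin n) ℂ)
    (hspec : ∀ μ ∈ spectrum ℂ A, ¬(μ.im = 0 ∧ μ.re ≤ 0)) :
    (∀ t ∈ Set.Icc (0:ℝ) 1, IsUnit ((t : ℂ) • (A - 1) + 1)) ∧
      NormedSpace.exp
        (∫ t in (0:ℝ)..1, (A - 1) * ((t : ℂ) • (A - 1) + 1)⁻¹) = A := by
  have hu := pl_unit A hspec
  refine ⟨hu, ?_⟩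
  set B := A - 1 with hB
  set f : ℝ → Matrix (Fin n) (Fin n) ℂ := fun t => B * ((t : ℂ) • B + 1)⁻¹ with hfdef
  have hBf : ∀ t, Commute B (f t) := fun t =>
    (Commute.refl B).mul_right (pl_comm_inv _ _
      (((Commute.refl B).smul_right _).add_right (Commute.one_right _)))
  have hcf : ∀ (C : Matrix (Fin n) (Fin n) ℂ), Commute C B → ∀ t, Commute C (f t) :=
    fun C hC t => hC.mul_right (pl_comm_inv _ _
      ((hC.smul_right _).add_right (Commute.one_right _)))
  let X : ℝ → Matrix (Fin n) (Fin n) ℂ := fun s => ∫ t in (0:ℝ)..s, f t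
  have hXB : ∀ s, Commute (X s) B := fun s => (pl_comm_int B f hBf s).symm
  have hcM : Continuous (fun t : ℝ => (t : ℂ) • B + 1) := by fun_prop
  let U : Set ℝ := {t | ((t : ℂ) • B + 1).det ≠ 0}
  have hUo : IsOpen U := isOpen_ne_fun hcM.matrix_det continuous_const
  have hUI : Set.Icc (0:ℝ) 1 ⊆ U := fun t ht =>
    ((Matrix.isUnit_iff_isUnit_det _).1 (hu t ht)).ne_zero
  have hfc : ContinuousOn f U := by
    have : ContinuousOn (fun t : ℝ => B * ((((t : ℂ) • B + 1).det)⁻¹ •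
        ((t : ℂ) • B + 1).adjugate)) U := by
      have h1 : ContinuousOn (fun t : ℝ => (((t : ℂ) • B + 1).det)⁻¹) U :=
        ContinuousOn.inv₀ hcM.matrix_det.continuousOn (fun t ht => ht)
      have h2 : ContinuousOn (fun t : ℝ => ((t : ℂ) • B + 1).adjugate) U :=
        hcM.matrix_adjugate.continuousOn
      exact continuousOn_const.mul (h1.smul h2)
    refine this.congr fun t ht => ?_
    simp only [hfdef, Matrix.inv_def, Ring.inverse_eq_inv']
  have key := pl_matrix X f B (by simp [X]) (fun s hs => ?_)
    (fun s r => pl_comm_int _ f (hcf _ (hXB s)) r) (fun s hs => ?_)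
  · rw [show B + 1 = A by simp [hB]] at key
    exact key
  · exact pl_deriv f U hUo hUI hfc s hs
  · have : s • B = (s : ℂ) • B := by ext; simp
    rw [this]
    simp only [hfdef]
    rw [mul_assoc, Matrix.nonsing_inv_mul _ ((Matrix.isUnit_iff_isUnit_det _).1 (hu s hs)), mul_one]
end

section
/- Let A : [0,1] → Matrix (Fin d) (Fin d) ℝ and e : [0,1] → ℝ^d be continuous, and let Φ : [0,1] → Matrix (Fin d) (Fin d) ℝ be differentiable with Φ(0) = I, Φ'(t) = A(t)·Φ(t), and Φ(t) invertible for every t ∈ [0,1]. Assume I - Φ(1) is invertible. If z : [0,1] → ℝ^d is differentiable with z'(t) = A(t)z(t) + e(t) for all t and z(1) = z(0), then z(0) = (I - Φ(1))⁻¹ Φ(1) ∫₀¹ Φ(s)⁻¹ e(s) ds, and consequently ‖z(0)‖ ≤ ‖(I - Φ(1))⁻¹ Φ(1)‖ · (sup_{s ∈ [0,1]} ‖Φ(s)⁻¹‖) · ∫₀¹ ‖e(s)‖ ds. -/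
open Matrix MeasureTheory intervalIntegral

attribute [local instance] Matrix.normedAddCommGroup Matrix.normedSpace

theorem aux_periodic {E : Type*} [NormedAddCommGroup E] [NormedSpace ℝ E] [CompleteSpace E]
    (A P Q : ℝ → E →L[ℝ] E) (e z : ℝ → E)
    (he : ContinuousOn e (Set.Icc 0 1))
    (hP0 : Q 0 = 1)
    (hP : ∀ t ∈ Set.Icc (0:ℝ) 1, HasDerivWithinAt P (A t * P t) (Set.Icc 0 1) t)
    (hPQ : ∀ t ∈ Set.Icc (0:ℝ) 1, P t * Q t = 1)
    (hQP : ∀ t ∈ Set.Icc (0:ℝ) 1, Q t * P t = 1)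
    (hz : ∀ t ∈ Set.Icc (0:ℝ) 1, HasDerivWithinAt z (A t (z t) + e t) (Set.Icc 0 1) t) :
    ContinuousOn Q (Set.Icc 0 1) ∧ ∫ s in (0:ℝ)..1, Q s (e s) = Q 1 (z 1) - z 0 := by
  have hQ : ∀ t ∈ Set.Icc (0:ℝ) 1, HasDerivWithinAt Q (-(Q t * A t)) (Set.Icc 0 1) t := by
    intro t ht
    have hQi : ∀ t ∈ Set.Icc (0:ℝ) 1, Q t = Ring.inverse (P t) := fun t ht =>
      (Ring.inverse_unit (⟨P t, Q t, hPQ t ht, hQP t ht⟩ : (E →L[ℝ] E)ˣ)).symm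
    have h := (hasFDerivAt_ringInverse (𝕜 := ℝ)
      (⟨P t, Q t, hPQ t ht, hQP t ht⟩ : (E →L[ℝ] E)ˣ)).comp_hasDerivWithinAt t (hP t ht)
    refine (h.congr (fun x hx => hQi x hx) (hQi t ht)).congr_deriv ?_
    simp only [Units.inv_mk, ContinuousLinearMap.neg_apply, ContinuousLinearMap.mulLeftRight_apply]
    rw [mul_assoc, mul_assoc, hPQ t ht, mul_one]
  have hQc : ContinuousOn Q (Set.Icc 0 1) := fun t ht => (hQ t ht).continuousWithinAt
  have hw : ∀ t ∈ Set.Icc (0:ℝ) 1,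
      HasDerivWithinAt (fun t => Q t (z t)) (Q t (e t)) (Set.Icc 0 1) t := by
    intro t ht
    refine ((hQ t ht).clm_apply (hz t ht)).congr_deriv ?_
    simp
  refine ⟨hQc, ?_⟩
  rw [integral_eq_sub_of_hasDerivAt_of_le zero_le_one
    (fun t ht => (hw t ht).continuousWithinAt)
    (fun t ht => (hw t (Set.Ioo_subset_Icc_self ht)).hasDerivAt (Icc_mem_nhds ht.1 ht.2))]
  · simp [hP0]
  · apply ContinuousOn.intervalIntegrable
    rw [Set.uIcc_of_le zero_le_one]
    exact hQc.clm_apply he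

/-- **A priori bound on the initial value of a periodic solution of a perturbed linear system.**
Let `A : [0,1] → Matrix (Fin d) (Fin d) ℝ` and `e : [0,1] → ℝ^d` be continuous, and let
`Φ` be the fundamental solution of `ẋ = A(t)x` (`Φ(0) = I`, `Φ' = AΦ`, each `Φ(t)` invertible),
with `I - Φ(1)` invertible. If `z` solves `z' = A(t)z + e(t)` with `z(1) = z(0)`, then
`z(0) = (I - Φ(1))⁻¹ Φ(1) ∫₀¹ Φ(s)⁻¹ e(s) ds`, and consequently
`‖z(0)‖ ≤ ‖(I - Φ(1))⁻¹Φ(1)‖ · (sup_{s∈[0,1]} ‖Φ(s)⁻¹‖) · ∫₀¹ ‖e(s)‖ ds`. -/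
theorem periodic_solution_initial_value_bound (d : ℕ)
    (A : ℝ → Matrix (Fin d) (Fin d) ℝ)
    (e : ℝ → EuclideanSpace ℝ (Fin d))
    (Φ : ℝ → Matrix (Fin d) (Fin d) ℝ)
    (hA : ContinuousOn A (Set.Icc 0 1))
    (he : ContinuousOn e (Set.Icc 0 1))
    (hΦ0 : Φ 0 = 1)
    (hΦ : ∀ t ∈ Set.Icc (0:ℝ) 1, HasDerivWithinAt Φ (A t * Φ t) (Set.Icc 0 1) t)
    (hΦinv : ∀ t ∈ Set.Icc (0:ℝ) 1, IsUnit (Φ t))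
    (hmono : IsUnit ((1 : Matrix (Fin d) (Fin d) ℝ) - Φ 1))
    (z : ℝ → EuclideanSpace ℝ (Fin d))
    (hz : ∀ t ∈ Set.Icc (0:ℝ) 1, HasDerivWithinAt z
      (Matrix.toEuclideanCLM (𝕜 := ℝ) (A t) (z t) + e t) (Set.Icc 0 1) t)
    (hper : z 1 = z 0) :
    z 0 = Matrix.toEuclideanCLM (𝕜 := ℝ) ((1 - Φ 1)⁻¹ * Φ 1)
        (∫ s in (0:ℝ)..1, Matrix.toEuclideanCLM (𝕜 := ℝ) ((Φ s)⁻¹) (e s)) ∧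
      ‖z 0‖ ≤ ‖Matrix.toEuclideanCLM (𝕜 := ℝ) ((1 - Φ 1)⁻¹ * Φ 1)‖ *
        (⨆ s : Set.Icc (0:ℝ) 1, ‖Matrix.toEuclideanCLM (𝕜 := ℝ) ((Φ (s : ℝ))⁻¹)‖) *
        ∫ s in (0:ℝ)..1, ‖e s‖ := by
  have hl (M : Matrix (Fin d) (Fin d) ℝ) (h : IsUnit M) : M * M⁻¹ = 1 :=
    Matrix.mul_nonsing_inv _ ((Matrix.isUnit_iff_isUnit_det _).1 h)
  have hr (M : Matrix (Fin d) (Fin d) ℝ) (h : IsUnit M) : M⁻¹ * M = 1 :=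
    Matrix.nonsing_inv_mul _ ((Matrix.isUnit_iff_isUnit_det _).1 h)
  have h1 : (1:ℝ) ∈ Set.Icc (0:ℝ) 1 := by simp
  let L : Matrix (Fin d) (Fin d) ℝ →L[ℝ] (EuclideanSpace ℝ (Fin d) →L[ℝ] EuclideanSpace ℝ (Fin d)) :=
    LinearMap.toContinuousLinearMap
      (Matrix.toEuclideanCLM (n := Fin d) (𝕜 := ℝ)).toAlgEquiv.toLinearMap
  have hL : ∀ M, L M = Matrix.toEuclideanCLM (𝕜 := ℝ) M := fun M => rfl
  obtain ⟨hQc, hint⟩ := aux_periodic (fun t => Matrix.toEuclideanCLM (𝕜 := ℝ) (A t))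
    (fun t => Matrix.toEuclideanCLM (𝕜 := ℝ) (Φ t))
    (fun t => Matrix.toEuclideanCLM (𝕜 := ℝ) ((Φ t)⁻¹)) e z he (by simp [hΦ0])
    (fun t ht => by
      have := L.hasFDerivAt.comp_hasDerivWithinAt t (hΦ t ht)
      exact this.congr_deriv ((hL _).trans (map_mul _ _ _)))
    (fun t ht => by rw [← map_mul, hl _ (hΦinv t ht), map_one])
    (fun t ht => by rw [← map_mul, hr _ (hΦinv t ht), map_one]) hz
  have key : z 0 = Matrix.toEuclideanCLM (𝕜 := ℝ) ((1 - Φ 1)⁻¹ * Φ 1)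
        (∫ s in (0:ℝ)..1, Matrix.toEuclideanCLM (𝕜 := ℝ) ((Φ s)⁻¹) (e s)) := by
    rw [hint, hper, map_sub, ← ContinuousLinearMap.mul_apply, ← map_mul,
      ← ContinuousLinearMap.sub_apply, ← map_sub, mul_assoc, hl _ (hΦinv 1 h1), ← mul_sub,
      hr _ hmono, map_one, ContinuousLinearMap.one_apply]
  refine ⟨key, ?_⟩
  have hbdd : BddAbove (Set.range fun s : Set.Icc (0:ℝ) 1 =>
      ‖Matrix.toEuclideanCLM (𝕜 := ℝ) ((Φ (s : ℝ))⁻¹)‖) := by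
    have := isCompact_Icc.bddAbove_image hQc.norm
    rwa [Set.image_eq_range] at this
  rw [mul_assoc]
  conv_lhs => rw [key]
  refine (ContinuousLinearMap.le_opNorm _ _).trans
    (mul_le_mul_of_nonneg_left ?_ (norm_nonneg _))
  rw [← intervalIntegral.integral_const_mul]
  refine norm_integral_le_of_norm_le zero_le_one (Filter.Eventually.of_forall fun t ht => ?_) ?_
  · refine (ContinuousLinearMap.le_opNorm _ _).trans
      (mul_le_mul_of_nonneg_right ?_ (norm_nonneg _))
    exact le_ciSup hbdd ⟨t, Set.Ioc_subset_Icc_self ht⟩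
  · apply ContinuousOn.intervalIntegrable
    rw [Set.uIcc_of_le zero_le_one]
    exact continuousOn_const.mul he.norm
end

section
/- Let A : [0,1] → Matrix (Fin d) (Fin d) ℝ and e : [0,1] → ℝ^d be continuous, and let Φ : [0,1] → Matrix (Fin d) (Fin d) ℝ be differentiable with Φ(0) = I, Φ'(t) = A(t)·Φ(t), and Φ(t) invertible for every t ∈ [0,1]. Assume I - Φ(1) is invertible, and set M₁ := sup_{t ∈ [0,1]} ‖Φ(t)‖, M₂ := sup_{t ∈ [0,1]} ‖Φ(t)⁻¹‖, C₂ := ‖(I - Φ(1))⁻¹ Φ(1)‖. If z : [0,1] → ℝ^d is differentiable with z'(t) = A(t)z(t) + e(t) for all t and z(1) = z(0), then (∫₀¹ ‖z(t)‖² dt)^{1/2} ≤ M₁ C₂ M₂ ∫₀¹ ‖e(s)‖ ds + (M₁ M₂ / √2) (∫₀¹ ‖e(s)‖² ds)^{1/2}. -/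
open Matrix MeasureTheory intervalIntegral

attribute [local instance] Matrix.normedAddCommGroup Matrix.normedSpace

theorem aux_cs (f : ℝ → ℝ) (hf : ContinuousOn f (Set.Icc 0 1)) (t : ℝ) (ht : t ∈ Set.Icc (0:ℝ) 1) :
    ∫ s in (0:ℝ)..t, f s ≤ Real.sqrt (∫ s in (0:ℝ)..1, f s ^ 2) * Real.sqrt t := by
  have hsub : Set.Icc (0:ℝ) t ⊆ Set.Icc 0 1 := Set.Icc_subset_Icc le_rfl ht.2
  have hi : IntervalIntegrable f volume 0 t :=
    ContinuousOn.intervalIntegrable_of_Icc ht.1 (hf.mono hsub)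
  have hi2 : IntervalIntegrable (fun s => f s ^ 2) volume 0 t :=
    ContinuousOn.intervalIntegrable_of_Icc ht.1 ((hf.mono hsub).pow 2)
  have hi3 : IntervalIntegrable (fun s => f s ^ 2) volume 0 1 :=
    ContinuousOn.intervalIntegrable_of_Icc zero_le_one (hf.pow 2)
  have hle : ∫ s in (0:ℝ)..t, f s ^ 2 ≤ ∫ s in (0:ℝ)..1, f s ^ 2 := by
    apply intervalIntegral.integral_mono_interval le_rfl ht.1 ht.2 _ hi3
    exact Filter.Eventually.of_forall fun s => sq_nonneg _
  have key : ∀ c : ℝ, 0 ≤ (∫ s in (0:ℝ)..t, f s ^ 2) - 2 * c * (∫ s in (0:ℝ)..t, f s) + c ^ 2 * t := by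
    intro c
    have h0 : 0 ≤ ∫ s in (0:ℝ)..t, (f s - c) ^ 2 :=
      intervalIntegral.integral_nonneg ht.1 fun s _ => sq_nonneg _
    have h1 : ∫ s in (0:ℝ)..t, (f s - c) ^ 2
        = (∫ s in (0:ℝ)..t, f s ^ 2) - 2 * c * (∫ s in (0:ℝ)..t, f s) + c ^ 2 * t := by
      have : (fun s => (f s - c) ^ 2) = fun s => (f s ^ 2 - (2 * c) * f s) + c ^ 2 := by
        funext s; ring
      rw [this, intervalIntegral.integral_add (hi2.sub (hi.const_mul _)) (by simp),
        intervalIntegral.integral_sub hi2 (hi.const_mul _), intervalIntegral.integral_const_mul]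
      simp [mul_comm]
    linarith
  rcases ht.1.eq_or_lt with h | h
  · subst h; simp
  · rw [← Real.sqrt_mul' _ ht.1]
    apply Real.le_sqrt_of_sq_le
    have := key ((∫ s in (0:ℝ)..t, f s) / t)
    set g := ∫ s in (0:ℝ)..t, f s
    have h2 : 2 * (g / t) * g = 2 * g ^ 2 / t := by ring
    have h3 : (g / t) ^ 2 * t = g ^ 2 / t := by field_simp
    have h4 : g ^ 2 / t ≤ ∫ s in (0:ℝ)..t, f s ^ 2 := by
      rw [h2, h3] at this
      have : 2 * g ^ 2 / t = 2 * (g ^ 2 / t) := by ring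
      linarith
    rw [div_le_iff₀ h] at h4
    exact h4.trans (mul_le_mul_of_nonneg_right hle ht.1)

theorem aux_l2 (n : ℝ → ℝ) (hn : ContinuousOn n (Set.Icc 0 1)) (hn0 : ∀ t, 0 ≤ n t) (a b : ℝ)
    (ha : 0 ≤ a) (hb : 0 ≤ b) (h : ∀ t ∈ Set.Icc (0:ℝ) 1, n t ≤ a + b * Real.sqrt t) :
    Real.sqrt (∫ t in (0:ℝ)..1, n t ^ 2) ≤ a + b / Real.sqrt 2 := by
  rw [Real.sqrt_le_left (by positivity)]
  have hc : Continuous fun t : ℝ => a ^ 2 + 2 * a * b * Real.sqrt t + b ^ 2 * t := by fun_prop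
  have h1 : ∫ t in (0:ℝ)..1, n t ^ 2
      ≤ ∫ t in (0:ℝ)..1, (a ^ 2 + 2 * a * b * Real.sqrt t + b ^ 2 * t) := by
    apply intervalIntegral.integral_mono_on zero_le_one
      (ContinuousOn.intervalIntegrable_of_Icc zero_le_one (hn.pow 2)) (hc.intervalIntegrable _ _)
    intro t ht
    have := pow_le_pow_left₀ (hn0 t) (h t ht) 2
    have h5 := Real.sq_sqrt ht.1
    calc n t ^ 2 ≤ _ := this
      _ = a ^ 2 + 2 * a * b * Real.sqrt t + b ^ 2 * (Real.sqrt t) ^ 2 := by ring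
      _ = _ := by rw [h5]
  have hs : ∫ t in (0:ℝ)..1, Real.sqrt t = 2 / 3 := by
    simp_rw [Real.sqrt_eq_rpow]
    rw [integral_rpow (by norm_num)]
    norm_num
  have h2 : ∫ t in (0:ℝ)..1, (a ^ 2 + 2 * a * b * Real.sqrt t + b ^ 2 * t)
      = a ^ 2 + 2 * a * b * (2 / 3) + b ^ 2 * (1 / 2) := by
    have c1 : Continuous fun t : ℝ => 2 * a * b * Real.sqrt t := by fun_prop
    have c2 : Continuous fun t : ℝ => b ^ 2 * t := by fun_prop
    have c3 : Continuous fun t : ℝ => a ^ 2 + 2 * a * b * Real.sqrt t := by fun_prop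
    rw [intervalIntegral.integral_add (c3.intervalIntegrable _ _) (c2.intervalIntegrable _ _),
      intervalIntegral.integral_add (by simp) (c1.intervalIntegrable _ _),
      intervalIntegral.integral_const_mul, intervalIntegral.integral_const_mul, hs]
    simp
  have hr : (2:ℝ) / 3 ≤ 1 / Real.sqrt 2 := by
    rw [div_le_div_iff₀ (by norm_num) (by positivity)]
    nlinarith [Real.sq_sqrt (show (0:ℝ) ≤ 2 by norm_num), Real.sqrt_nonneg 2]
  have hr2 : (1 / Real.sqrt 2) ^ 2 = 1 / 2 := by
    rw [div_pow, Real.sq_sqrt (by norm_num)]; norm_num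
  have e1 : (a + b / Real.sqrt 2) ^ 2
      = a ^ 2 + 2 * a * b * (1 / Real.sqrt 2) + b ^ 2 * (1 / Real.sqrt 2) ^ 2 := by ring
  rw [e1, hr2]
  have := mul_le_mul_of_nonneg_left hr (show 0 ≤ 2 * a * b by positivity)
  linarith

theorem aux_core {E : Type*} [NormedAddCommGroup E] [NormedSpace ℝ E] [CompleteSpace E]
    (A P Q : ℝ → E →L[ℝ] E) (K : E →L[ℝ] E) (e z : ℝ → E)
    (he : ContinuousOn e (Set.Icc 0 1))
    (hP0 : P 0 = 1)
    (hP : ∀ t ∈ Set.Icc (0:ℝ) 1, HasDerivWithinAt P (A t * P t) (Set.Icc 0 1) t)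
    (hPQ : ∀ t ∈ Set.Icc (0:ℝ) 1, P t * Q t = 1)
    (hQP : ∀ t ∈ Set.Icc (0:ℝ) 1, Q t * P t = 1)
    (hK : ∀ x y : E, x - P 1 x = P 1 y → x = K y)
    (M₁ M₂ : ℝ)
    (hM₁ : M₁ = ⨆ t : Set.Icc (0:ℝ) 1, ‖P (t : ℝ)‖)
    (hM₂ : M₂ = ⨆ t : Set.Icc (0:ℝ) 1, ‖Q (t : ℝ)‖)
    (hz : ∀ t ∈ Set.Icc (0:ℝ) 1, HasDerivWithinAt z (A t (z t) + e t) (Set.Icc 0 1) t)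
    (hper : z 1 = z 0) :
    Real.sqrt (∫ t in (0:ℝ)..1, ‖z t‖ ^ 2)
      ≤ M₁ * ‖K‖ * M₂ * (∫ s in (0:ℝ)..1, ‖e s‖)
        + (M₁ * M₂ / Real.sqrt 2) * Real.sqrt (∫ s in (0:ℝ)..1, ‖e s‖ ^ 2) := by
  have m0 : (0:ℝ) ∈ Set.Icc (0:ℝ) 1 := by simp
  have m1 : (1:ℝ) ∈ Set.Icc (0:ℝ) 1 := by simp
  have hQ : ∀ t ∈ Set.Icc (0:ℝ) 1, HasDerivWithinAt Q (-(Q t * A t)) (Set.Icc 0 1) t := by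
    intro t ht
    let U : ∀ s ∈ Set.Icc (0:ℝ) 1, (E →L[ℝ] E)ˣ := fun s hs => ⟨P s, Q s, hPQ s hs, hQP s hs⟩
    have h1 := (hasFDerivAt_ringInverse (𝕜 := ℝ) (U t ht)).comp_hasDerivWithinAt t (hP t ht)
    have h2 : ∀ s ∈ Set.Icc (0:ℝ) 1, Q s = (Ring.inverse ∘ P) s := fun s hs =>
      (Ring.inverse_unit (U s hs)).symm
    have h3 := h1.congr h2 (h2 t ht)
    have h4 : -(Q t * A t) = -(Q t * (A t * P t) * Q t) := by
      rw [mul_assoc, mul_assoc, hPQ t ht, mul_one]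
    rw [h4]
    exact h3
  have cP : ContinuousOn P (Set.Icc 0 1) := fun t ht => (hP t ht).continuousWithinAt
  have cQ : ContinuousOn Q (Set.Icc 0 1) := fun t ht => (hQ t ht).continuousWithinAt
  have cz : ContinuousOn z (Set.Icc 0 1) := fun t ht => (hz t ht).continuousWithinAt
  have bd : ∀ R : ℝ → E →L[ℝ] E, ContinuousOn R (Set.Icc 0 1) → ∀ t ∈ Set.Icc (0:ℝ) 1,
      ‖R t‖ ≤ ⨆ t : Set.Icc (0:ℝ) 1, ‖R (t : ℝ)‖ := by
    intro R hR t ht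
    have hb : BddAbove (Set.range fun t : Set.Icc (0:ℝ) 1 => ‖R (t : ℝ)‖) := by
      have := (isCompact_Icc.image_of_continuousOn hR.norm).bddAbove
      rwa [Set.image_eq_range] at this
    exact le_ciSup hb (⟨t, ht⟩ : Set.Icc (0:ℝ) 1)
  have bP : ∀ t ∈ Set.Icc (0:ℝ) 1, ‖P t‖ ≤ M₁ := hM₁ ▸ bd P cP
  have bQ : ∀ t ∈ Set.Icc (0:ℝ) 1, ‖Q t‖ ≤ M₂ := hM₂ ▸ bd Q cQ
  have M1n : 0 ≤ M₁ := (norm_nonneg _).trans (bP 0 m0)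
  have M2n : 0 ≤ M₂ := (norm_nonneg _).trans (bQ 0 m0)
  have hu : ∀ t ∈ Set.Icc (0:ℝ) 1,
      HasDerivWithinAt (fun s => Q s (z s)) (Q t (e t)) (Set.Icc 0 1) t := by
    intro t ht
    have := (hQ t ht).clm_apply (hz t ht)
    convert this using 1
    simp
  have cQe : ContinuousOn (fun s => Q s (e s)) (Set.Icc 0 1) := cQ.clm_apply he
  have cu : ContinuousOn (fun s => Q s (z s)) (Set.Icc 0 1) := cQ.clm_apply cz
  have hQ0 : Q 0 = 1 := by simpa [hP0] using hPQ 0 m0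
  have ftc : ∀ t ∈ Set.Icc (0:ℝ) 1, ∫ s in (0:ℝ)..t, Q s (e s) = Q t (z t) - z 0 := by
    intro t ht
    have hsub : Set.Icc (0:ℝ) t ⊆ Set.Icc 0 1 := Set.Icc_subset_Icc le_rfl ht.2
    rw [intervalIntegral.integral_eq_sub_of_hasDerivAt_of_le ht.1 (cu.mono hsub) ?_
      (ContinuousOn.intervalIntegrable_of_Icc ht.1 (cQe.mono hsub))]
    · simp [hQ0]
    · intro s hs
      exact (hu s ⟨hs.1.le, hs.2.le.trans ht.2⟩).hasDerivAt
        (Icc_mem_nhds hs.1 (hs.2.trans_le ht.2))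
  have bI : ∀ t ∈ Set.Icc (0:ℝ) 1,
      ‖∫ s in (0:ℝ)..t, Q s (e s)‖ ≤ M₂ * ∫ s in (0:ℝ)..t, ‖e s‖ := by
    intro t ht
    have hsub : Set.Icc (0:ℝ) t ⊆ Set.Icc 0 1 := Set.Icc_subset_Icc le_rfl ht.2
    rw [← intervalIntegral.integral_const_mul]
    apply intervalIntegral.norm_integral_le_of_norm_le ht.1
    · refine Filter.Eventually.of_forall fun s hs => ?_
      exact (Q s).le_of_opNorm_le (bQ s ⟨hs.1.le, hs.2.trans ht.2⟩) _
    · exact (ContinuousOn.intervalIntegrable_of_Icc ht.1 (he.norm.mono hsub)).const_mul _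
  have hPz : ∀ t ∈ Set.Icc (0:ℝ) 1, z t = P t (z 0 + ∫ s in (0:ℝ)..t, Q s (e s)) := by
    intro t ht
    rw [ftc t ht, add_sub_cancel]
    have := congrArg (fun L : E →L[ℝ] E => L (z t)) (hPQ t ht)
    simpa using this.symm
  have hz0 : z 0 = K (∫ s in (0:ℝ)..1, Q s (e s)) := by
    apply hK
    have := hPz 1 m1
    rw [hper, map_add] at this
    rw [sub_eq_iff_eq_add, add_comm]
    exact this
  have bz0 : ‖z 0‖ ≤ ‖K‖ * (M₂ * ∫ s in (0:ℝ)..1, ‖e s‖) := by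
    rw [hz0]
    exact (K.le_opNorm _).trans (mul_le_mul_of_nonneg_left (bI 1 m1) (norm_nonneg _))
  have En : 0 ≤ ∫ s in (0:ℝ)..1, ‖e s‖ :=
    intervalIntegral.integral_nonneg zero_le_one fun _ _ => norm_nonneg _
  have fin := aux_l2 (fun t => ‖z t‖) cz.norm (fun t => norm_nonneg _)
    (M₁ * ‖K‖ * M₂ * (∫ s in (0:ℝ)..1, ‖e s‖))
    (M₁ * M₂ * Real.sqrt (∫ s in (0:ℝ)..1, ‖e s‖ ^ 2)) (by positivity) (by positivity) (by
      intro t ht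
      have c1 := aux_cs (fun s => ‖e s‖) he.norm t ht
      have c2 : ‖z t‖ ≤ M₁ * ‖z 0 + ∫ s in (0:ℝ)..t, Q s (e s)‖ := by
        conv_lhs => rw [hPz t ht]
        exact (P t).le_of_opNorm_le (bP t ht) _
      have c3 : ‖z 0 + ∫ s in (0:ℝ)..t, Q s (e s)‖ ≤ ‖K‖ * (M₂ * ∫ s in (0:ℝ)..1, ‖e s‖)
          + M₂ * (Real.sqrt (∫ s in (0:ℝ)..1, ‖e s‖ ^ 2) * Real.sqrt t) :=
        (norm_add_le _ _).trans (add_le_add bz0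
          ((bI t ht).trans (mul_le_mul_of_nonneg_left c1 M2n)))
      calc ‖z t‖ ≤ _ := c2
        _ ≤ _ := mul_le_mul_of_nonneg_left c3 M1n
        _ = _ := by ring)
  convert fin using 2
  ring

/-- **`L²` bound on a periodic solution of a perturbed linear system.**
Let `A : [0,1] → Matrix (Fin d) (Fin d) ℝ` and `e : [0,1] → ℝ^d` be continuous and let `Φ` be
the fundamental solution of `ẋ = A(t)x` (`Φ(0) = I`, `Φ' = AΦ`, each `Φ(t)` invertible) with
`I - Φ(1)` invertible. Set `M₁ := sup ‖Φ(t)‖`, `M₂ := sup ‖Φ(t)⁻¹‖`,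
`C₂ := ‖(I - Φ(1))⁻¹Φ(1)‖`. If `z' = A(t)z + e(t)` on `[0,1]` and `z(1) = z(0)`, then
`(∫₀¹‖z‖²)^{1/2} ≤ M₁C₂M₂ ∫₀¹‖e‖ + (M₁M₂/√2)(∫₀¹‖e‖²)^{1/2}`. -/
theorem periodic_solution_L2_bound (d : ℕ)
    (A : ℝ → Matrix (Fin d) (Fin d) ℝ)
    (e : ℝ → EuclideanSpace ℝ (Fin d))
    (Φ : ℝ → Matrix (Fin d) (Fin d) ℝ)
    (hA : ContinuousOn A (Set.Icc 0 1))
    (he : ContinuousOn e (Set.Icc 0 1))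
    (hΦ0 : Φ 0 = 1)
    (hΦ : ∀ t ∈ Set.Icc (0:ℝ) 1, HasDerivWithinAt Φ (A t * Φ t) (Set.Icc 0 1) t)
    (hΦinv : ∀ t ∈ Set.Icc (0:ℝ) 1, IsUnit (Φ t))
    (hmono : IsUnit ((1 : Matrix (Fin d) (Fin d) ℝ) - Φ 1))
    (M₁ M₂ C₂ : ℝ)
    (hM₁ : M₁ = ⨆ t : Set.Icc (0:ℝ) 1, ‖Matrix.toEuclideanCLM (𝕜 := ℝ) (Φ (t : ℝ))‖)
    (hM₂ : M₂ = ⨆ t : Set.Icc (0:ℝ) 1, ‖Matrix.toEuclideanCLM (𝕜 := ℝ) ((Φ (t : ℝ))⁻¹)‖)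
    (hC₂ : C₂ = ‖Matrix.toEuclideanCLM (𝕜 := ℝ) ((1 - Φ 1)⁻¹ * Φ 1)‖)
    (z : ℝ → EuclideanSpace ℝ (Fin d))
    (hz : ∀ t ∈ Set.Icc (0:ℝ) 1, HasDerivWithinAt z
      (Matrix.toEuclideanCLM (𝕜 := ℝ) (A t) (z t) + e t) (Set.Icc 0 1) t)
    (hper : z 1 = z 0) :
    Real.sqrt (∫ t in (0:ℝ)..1, ‖z t‖ ^ 2)
      ≤ M₁ * C₂ * M₂ * (∫ s in (0:ℝ)..1, ‖e s‖)
        + (M₁ * M₂ / Real.sqrt 2) * Real.sqrt (∫ s in (0:ℝ)..1, ‖e s‖ ^ 2) := by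
  subst hC₂
  let L : Matrix (Fin d) (Fin d) ℝ →L[ℝ] (EuclideanSpace ℝ (Fin d) →L[ℝ] EuclideanSpace ℝ (Fin d)) :=
    LinearMap.toContinuousLinearMap
      ((Matrix.toEuclideanCLM (n := Fin d) (𝕜 := ℝ)).toAlgEquiv.toLinearMap)
  have hL : ∀ X, L X = Matrix.toEuclideanCLM (n := Fin d) (𝕜 := ℝ) X := fun X => rfl
  refine aux_core (fun t => Matrix.toEuclideanCLM (n := Fin d) (𝕜 := ℝ) (A t))
    (fun t => Matrix.toEuclideanCLM (n := Fin d) (𝕜 := ℝ) (Φ t))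
    (fun t => Matrix.toEuclideanCLM (n := Fin d) (𝕜 := ℝ) (Φ t)⁻¹)
    _ e z he ?_ ?_ ?_ ?_ ?_ M₁ M₂ hM₁ hM₂ hz hper
  · simp [hΦ0]
  · intro t ht
    have := L.hasFDerivAt.comp_hasDerivWithinAt t (hΦ t ht)
    have h2 : Matrix.toEuclideanCLM (n := Fin d) (𝕜 := ℝ) (A t)
        * Matrix.toEuclideanCLM (n := Fin d) (𝕜 := ℝ) (Φ t) = L (A t * Φ t) :=
      (map_mul (Matrix.toEuclideanCLM (n := Fin d) (𝕜 := ℝ)) (A t) (Φ t)).symm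
    change HasDerivWithinAt _ (Matrix.toEuclideanCLM (n := Fin d) (𝕜 := ℝ) (A t)
        * Matrix.toEuclideanCLM (n := Fin d) (𝕜 := ℝ) (Φ t)) _ _
    rw [h2]
    exact this
  · intro t ht
    change _ * _ = _
    rw [← map_mul, Matrix.mul_nonsing_inv _ ((Matrix.isUnit_iff_isUnit_det _).1 (hΦinv t ht)), map_one]
  · intro t ht
    change _ * _ = _
    rw [← map_mul, Matrix.nonsing_inv_mul _ ((Matrix.isUnit_iff_isUnit_det _).1 (hΦinv t ht)), map_one]
  · intro x y hxy
    have h1 : Matrix.toEuclideanCLM (n := Fin d) (𝕜 := ℝ) (1 - Φ 1) x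
        = Matrix.toEuclideanCLM (n := Fin d) (𝕜 := ℝ) (Φ 1) y := by
      rw [map_sub, map_one]; exact hxy
    rw [map_mul, mul_apply_eq_comp, ← h1, ← mul_apply_eq_comp, ← map_mul,
      Matrix.nonsing_inv_mul _ ((Matrix.isUnit_iff_isUnit_det _).1 hmono), map_one]
    rfl
end
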